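/- arXiv:2205.08825 — 12 statements merged into one kernel-verified Lean document; each statement's English description precedes it below -/
import Mathlib

section
/- Let X = Σ_{i=1}^n Rᵢ ∂/∂xᵢ be a polynomial vector field of degree at most one defined on S_{p,q}, with Rᵢ = Σ_{j=1}^n c_{ij} xⱼ + c_{i0} for real coefficients c_{ij}, c_{i0}. Then the matrix (c_{ij})_{1 ≤ i,j ≤ p+1} is skew-symmetric, i.e. c_{ij} + c_{ji} = 0 for all 1 ≤ i, j ≤ p+1, and c_{i0} = 0 for all i ∈ {1,…,n}. -/
open MvPolynomial

/-- The first `p+1` coordinates of `Fin (p+q+1)`, corresponding to `x₁, …, x_{p+1}`. -/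
def idx1 (p q : ℕ) (i : Fin (p+1)) : Fin (p+q+1) := Fin.castLE (by omega) i

/-- The last `q` coordinates of `Fin (p+q+1)`, corresponding to `x_{p+2}, …, x_n`. -/
def idx2 (p q : ℕ) (j : Fin q) : Fin (p+q+1) := ⟨p+1+(j:ℕ), by omega⟩

/-- The polynomial `h = (x₁² + ⋯ + x_{p+1}² − a²)² + x_{p+2}² + ⋯ + x_n² − 1`
whose zero set is `S_{p,q}`. -/
noncomputable def hpq (p q : ℕ) (a : ℝ) : MvPolynomial (Fin (p+q+1)) ℝ :=
  ((∑ i : Fin (p+1), X (idx1 p q i) ^ 2) - C (a^2))^2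
    + (∑ j : Fin q, X (idx2 p q j) ^ 2) - 1

lemma sum_split (p q : ℕ) {M : Type*} [AddCommMonoid M] (f : Fin (p+q+1) → M) :
    ∑ k, f k = (∑ i, f (idx1 p q i)) + ∑ j, f (idx2 p q j) := by
  have e : (p+1)+q = p+q+1 := by omega
  rw [← Equiv.sum_comp (finCongr e) f, Fin.sum_univ_add]
  rfl

lemma hpq_eq (p q : ℕ) (a : ℝ) : hpq p q a =
    ((∑ k : Fin (p+q+1), if (k:ℕ) < p+1 then (X k : MvPolynomial (Fin (p+q+1)) ℝ)^2 else 0)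
      - C (a^2))^2 + (∑ k : Fin (p+q+1), if (k:ℕ) < p+1 then 0 else X k ^ 2) - 1 := by
  rw [sum_split, sum_split]
  have A : ∀ i : Fin (p+1), ((idx1 p q i : Fin (p+q+1)) : ℕ) < p+1 := fun i => i.2
  have B : ∀ j : Fin q, ¬ ((idx2 p q j : Fin (p+q+1)) : ℕ) < p+1 := by
    intro j; simp only [idx2]; omega
  simp only [A, B, if_true, if_false, Finset.sum_const_zero, add_zero, zero_add]
  rfl

lemma eval_hpq (p q : ℕ) (a : ℝ) (x : Fin (p+q+1) → ℝ) : eval x (hpq p q a) =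
    ((∑ k : Fin (p+q+1), if (k:ℕ) < p+1 then x k^2 else 0)
      - a^2)^2 + (∑ k : Fin (p+q+1), if (k:ℕ) < p+1 then 0 else x k ^ 2) - 1 := by
  rw [hpq_eq]
  simp [apply_ite (eval x)]

lemma eval_pderiv_hpq (p q : ℕ) (a : ℝ) (x : Fin (p+q+1) → ℝ) (k : Fin (p+q+1)) :
    eval x (pderiv k (hpq p q a)) =
    if (k:ℕ) < p+1 then 4 * ((∑ k : Fin (p+q+1), if (k:ℕ) < p+1 then x k^2 else 0) - a^2) * x k
    else 2 * x k := by
  have h1 : ∀ l : Fin (p+q+1), pderiv k ((X l : MvPolynomial (Fin (p+q+1)) ℝ)^2)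
      = if l = k then 2 * X k else 0 := by
    intro l
    rw [pderiv_pow, pderiv_X]
    by_cases h : l = k
    · subst h; simp
    · simp [h, Pi.single_apply, Ne.symm h]
  rw [hpq_eq]
  by_cases hk : (k:ℕ) < p+1
  all_goals
    have h2 : pderiv k (∑ l : Fin (p+q+1), if (l:ℕ) < p+1 then
        (X l : MvPolynomial (Fin (p+q+1)) ℝ)^2 else 0) = if (k:ℕ) < p+1 then 2 * X k else 0 := by
      rw [map_sum, Finset.sum_eq_single k]
      · simp [hk, h1]
      · intro b _ hb
        split_ifs
        · rw [h1, if_neg hb]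
        · simp
      · simp
    have h3 : pderiv k (∑ l : Fin (p+q+1), if (l:ℕ) < p+1 then 0 else
        (X l : MvPolynomial (Fin (p+q+1)) ℝ)^2) = if (k:ℕ) < p+1 then 0 else 2 * X k := by
      rw [map_sum, Finset.sum_eq_single k]
      · simp [hk, h1]
      · intro b _ hb
        split_ifs
        · simp
        · rw [h1, if_neg hb]
      · simp
    rw [(pderiv k).map_sub, (pderiv k).map_add, pderiv_pow, (pderiv k).map_sub, h2, h3]
    simp [hk, apply_ite (eval x)]
  ring

lemma two_sum {n : ℕ} (f : Fin n → ℝ) (i j : Fin n) (hij : i ≠ j)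
    (h : ∀ k, k ≠ i → k ≠ j → f k = 0) : ∑ k, f k = f i + f j := by
  rw [← Finset.sum_pair hij]
  symm
  apply Finset.sum_subset (Finset.subset_univ _)
  intro k _ hk
  simp only [Finset.mem_insert, Finset.mem_singleton, not_or] at hk
  exact h k hk.1 hk.2

lemma key (p q : ℕ) (a : ℝ)
    (R : Fin (p+q+1) → MvPolynomial (Fin (p+q+1)) ℝ)
    (c : Fin (p+q+1) → Fin (p+q+1) → ℝ) (c0 : Fin (p+q+1) → ℝ)
    (hR : ∀ i, R i = (∑ j, C (c i j) * X j) + C (c0 i))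
    (K : MvPolynomial (Fin (p+q+1)) ℝ)
    (hinv : (∑ i, R i * pderiv i (hpq p q a)) = K * hpq p q a)
    (i j : Fin (p+q+1)) (hij : i ≠ j) (r t s : ℝ)
    (hs : s = (if (i:ℕ) < p+1 then r^2 else 0) + (if (j:ℕ) < p+1 then t^2 else 0) - a^2)
    (h0 : s^2 + ((if (i:ℕ) < p+1 then 0 else r^2) + (if (j:ℕ) < p+1 then 0 else t^2)) - 1 = 0) :
    (c i i * r + c i j * t + c0 i) * (if (i:ℕ) < p+1 then 4 * s * r else 2 * r) +
    (c j i * r + c j j * t + c0 j) * (if (j:ℕ) < p+1 then 4 * s * t else 2 * t) = 0 := by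
  let x : Fin (p+q+1) → ℝ := fun k => if k = i then r else if k = j then t else 0
  have xi : x i = r := by simp [x]
  have xj : x j = t := by simp [x, hij.symm]
  have xk : ∀ k, k ≠ i → k ≠ j → x k = 0 := by
    intro k h1 h2; simp [x, h1, h2]
  have S : (∑ k : Fin (p+q+1), if (k:ℕ) < p+1 then x k^2 else 0) - a^2 = s := by
    rw [two_sum _ i j hij (by intro k h1 h2; simp [xk k h1 h2]), xi, xj, hs]
  have H : eval x (hpq p q a) = 0 := by
    rw [eval_hpq, S, two_sum _ i j hij (by intro k h1 h2; simp [xk k h1 h2]), xi, xj, h0]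
  have E := congrArg (eval x) hinv
  rw [map_mul, H, mul_zero, map_sum] at E
  have L : ∀ k, eval x (R k) = c k i * r + c k j * t + c0 k := by
    intro k
    rw [hR]
    simp only [map_add, map_sum, map_mul, eval_C, eval_X]
    rw [two_sum _ i j hij (by intro k h1 h2; simp [xk k h1 h2]), xi, xj]
  simp only [map_mul, eval_pderiv_hpq, S, L] at E
  rw [two_sum _ i j hij (by intro k h1 h2; simp [xk k h1 h2]), xi, xj] at E
  exact E

/-- A degree-one polynomial vector field `X = Σ Rᵢ ∂/∂xᵢ`, with
`Rᵢ = Σⱼ c_{ij} xⱼ + c_{i0}`, defined on `S_{p,q}` (i.e. `X h = K h`) has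
`(c_{ij})_{1 ≤ i,j ≤ p+1}` skew-symmetric and all constant terms `c_{i0} = 0`. -/
theorem stmt1 (p q : ℕ) (hp : 1 ≤ p) (hq : 1 ≤ q) (a : ℝ) (ha : 1 < a)
    (R : Fin (p+q+1) → MvPolynomial (Fin (p+q+1)) ℝ)
    (c : Fin (p+q+1) → Fin (p+q+1) → ℝ) (c0 : Fin (p+q+1) → ℝ)
    (hR : ∀ i, R i = (∑ j, C (c i j) * X j) + C (c0 i))
    (K : MvPolynomial (Fin (p+q+1)) ℝ)
    (hinv : (∑ i, R i * pderiv i (hpq p q a)) = K * hpq p q a) :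
    (∀ i j : Fin (p+q+1), (i:ℕ) < p+1 → (j:ℕ) < p+1 → c i j + c j i = 0) ∧
    (∀ i, c0 i = 0) := by
  have KEY := key p q a R c c0 hR K hinv
  let z : Fin (p+q+1) := ⟨p+q, by omega⟩
  have hz : ¬ ((z:ℕ) < p+1) := by simp only [z]; omega
  have D : ∀ i : Fin (p+q+1), (i:ℕ) < p+1 → c i i = 0 ∧ c0 i = 0 := by
    intro i hi
    have hiz : i ≠ z := by rintro rfl; exact hz hi
    have ht : 0 < √(a^2+1) := Real.sqrt_pos.mpr (by positivity)
    have ht2 : √(a^2+1)^2 = a^2+1 := Real.sq_sqrt (by positivity)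
    generalize √(a^2+1) = t at ht ht2
    have k1 := KEY i z hiz t 0 1 (by simp [hi, hz, ht2]) (by simp [hi, hz])
    have k2 := KEY i z hiz (-t) 0 1 (by simp [hi, hz, ht2]) (by simp [hi, hz])
    simp only [hi, hz, if_true, if_false] at k1 k2
    constructor
    · have : c i i * t^2 = 0 := by linarith
      exact (mul_eq_zero.mp this).resolve_right (by positivity)
    · have : c0 i * t = 0 := by linarith
      exact (mul_eq_zero.mp this).resolve_right ht.ne'
  constructor
  · intro i j hi hj
    by_cases hij : i = j
    · subst hij; linarith [(D i hi).1]
    have ht : 0 < √((a^2+1)/2) := Real.sqrt_pos.mpr (by positivity)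
    have ht2 : √((a^2+1)/2)^2 = (a^2+1)/2 := Real.sq_sqrt (by positivity)
    generalize √((a^2+1)/2) = t at ht ht2
    have k1 := KEY i j hij t t 1 (by simp only [hi, hj, if_true, ht2]; ring) (by simp [hi, hj])
    simp only [hi, hj, if_true, (D i hi).1, (D j hj).1, (D i hi).2, (D j hj).2] at k1
    have : (c i j + c j i) * t^2 = 0 := by linarith
    exact (mul_eq_zero.mp this).resolve_right (by positivity)
  · intro i
    by_cases hi : (i:ℕ) < p+1
    · exact (D i hi).2
    let o : Fin (p+q+1) := ⟨0, by omega⟩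
    have ho : (o:ℕ) < p+1 := by simp [o]
    have hoi : o ≠ i := by rintro h; rw [← h] at hi; exact hi ho
    have k : ∀ r t : ℝ, r^2 = a^2 → t^2 = 1 → (c i o * r + c i i * t + c0 i) * (2 * t) = 0 := by
      intro r t hr ht
      have := KEY o i hoi r t 0 (by simp [ho, hi, hr]) (by simp [ho, hi, ht])
      simpa only [ho, hi, if_true, if_false, mul_zero, zero_mul, zero_add] using this
    have k1 := k a 1 (by ring) (by ring)
    have k2 := k (-a) 1 (by ring) (by ring)
    have k3 := k a (-1) (by ring) (by ring)
    have k4 := k (-a) (-1) (by ring) (by ring)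
    linarith
end

section
/- Let X = Σ_{i=1}^n Rᵢ ∂/∂xᵢ be a polynomial vector field of degree at most one defined on S_{p,q}, so that X h = K h for some polynomial K. Then K = 0; that is, 4(x₁² + ⋯ + x_{p+1}² − a²)·(Σ_{i=1}^{p+1} xᵢRᵢ) + 2·Σ_{j=p+2}^n xⱼRⱼ = 0 identically, and hence h is a first integral of X (X h = 0). -/
open MvPolynomial

theorem aux_totalDegree_pderiv {n : ℕ} (i : Fin n) (f : MvPolynomial (Fin n) ℝ) :
    (pderiv i f).totalDegree ≤ f.totalDegree - 1 := by
  unfold totalDegree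
  refine Finset.sup_le fun m hm => ?_
  rw [mem_support_iff, coeff_pderiv] at hm
  have h1 : m + Finsupp.single i 1 ∈ f.support := by
    rw [mem_support_iff]
    intro h0
    apply hm
    simp [h0]
  have h2 := le_totalDegree h1
  rw [Finsupp.sum_add_index' (by simp) (by simp), Finsupp.sum_single_index rfl] at h2
  unfold totalDegree at h2
  omega


theorem aux_formula (p q : ℕ) (a : ℝ)
    (R : Fin (p+q+1) → MvPolynomial (Fin (p+q+1)) ℝ) :
    (∑ i, R i * pderiv i (hpq p q a)) =
    4 * ((∑ i : Fin (p+1), X (idx1 p q i) ^ 2) - C (a^2))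
        * (∑ i : Fin (p+1), X (idx1 p q i) * R (idx1 p q i))
      + 2 * (∑ j : Fin q, X (idx2 p q j) * R (idx2 p q j)) := by
  have hcs : ∀ (D : Fin (p+q+1) → Derivation ℝ (MvPolynomial (Fin (p+q+1)) ℝ)
      (MvPolynomial (Fin (p+q+1)) ℝ)) f, (∑ i, D i) f = ∑ i, D i f := by
    intro D f
    have := congrFun (map_sum (Derivation.coeFnAddMonoidHom (R := ℝ)
      (A := MvPolynomial (Fin (p+q+1)) ℝ) (M := MvPolynomial (Fin (p+q+1)) ℝ)) D Finset.univ) f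
    rw [Finset.sum_apply] at this
    exact this
  have hD : (∑ i, R i • (pderiv i : Derivation ℝ (MvPolynomial (Fin (p+q+1)) ℝ) _))
      = mkDerivation ℝ R := by
    apply derivation_ext
    intro j
    rw [mkDerivation_X, hcs]
    rw [Finset.sum_eq_single j]
    · simp
    · intro b _ hb
      simp [pderiv_X_of_ne hb.symm]
    · simp
  have h1 : (∑ i, R i * pderiv i (hpq p q a)) = mkDerivation ℝ R (hpq p q a) := by
    rw [← hD, hcs]
    simp
  have hsq : ∀ i, mkDerivation ℝ R (X i ^ 2) = 2 * (X i * R i) := by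
    intro i
    rw [Derivation.leibniz_pow, mkDerivation_X]
    simp [mul_assoc]
  rw [h1]
  unfold hpq
  rw [map_sub, map_add, Derivation.leibniz_pow, map_sub, map_sum, map_sum, derivation_C,
    Derivation.map_one_eq_zero]
  simp only [hsq, ← Finset.mul_sum, smul_eq_mul, nsmul_eq_mul]
  push_cast
  ring

/-- For a polynomial vector field `X = Σ Rᵢ ∂/∂xᵢ` of degree at most one defined on
`S_{p,q}` (i.e. `X h = K h`), the cofactor `K` vanishes; that is,
`4(x₁²+⋯+x_{p+1}²−a²)·(Σ_{i≤p+1} xᵢRᵢ) + 2·Σ_{j≥p+2} xⱼRⱼ = 0` identically,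
and hence `h` is a first integral of `X` (`X h = 0`). -/
theorem stmt2 (p q : ℕ) (hp : 1 ≤ p) (hq : 1 ≤ q) (a : ℝ) (ha : 1 < a)
    (R : Fin (p+q+1) → MvPolynomial (Fin (p+q+1)) ℝ)
    (hdeg : ∀ i, (R i).totalDegree ≤ 1)
    (K : MvPolynomial (Fin (p+q+1)) ℝ)
    (hinv : (∑ i, R i * pderiv i (hpq p q a)) = K * hpq p q a) :
    K = 0 ∧
    4 * ((∑ i : Fin (p+1), X (idx1 p q i) ^ 2) - C (a^2))
        * (∑ i : Fin (p+1), X (idx1 p q i) * R (idx1 p q i))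
      + 2 * (∑ j : Fin q, X (idx2 p q j) * R (idx2 p q j)) = 0 ∧
    (∑ i, R i * pderiv i (hpq p q a)) = 0 := by
  have hsum := aux_formula p q a R
  set pt : ℝ → Fin (p+q+1) → ℝ := fun t i => if i = idx1 p q 0 then t else 0 with hpt
  have e1 : ∀ t, ∑ i : Fin (p+1), (pt t (idx1 p q i)) ^ 2 = t ^ 2 := by
    intro t
    rw [Finset.sum_eq_single 0]
    · simp [hpt]
    · intro b _ hb
      have : idx1 p q b ≠ idx1 p q 0 := fun h => hb (Fin.castLE_injective _ h)
      simp [hpt, this]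
    · simp
  have e2 : ∀ t j, pt t (idx2 p q j) = 0 := by
    intro t j
    have : idx2 p q j ≠ idx1 p q 0 := by
      intro h
      have := congrArg Fin.val h
      simp [idx1, idx2] at this
    simp [hpt, this]
  have e3 : ∀ t, eval (pt t) (hpq p q a) = (t^2 - a^2)^2 - 1 := by
    intro t
    simp [hpq, e1, e2]
  have hd : (hpq p q a).totalDegree ≠ 0 := by
    intro h0
    rw [totalDegree_eq_zero_iff_eq_C] at h0
    have h1 := e3 a
    have h2 := e3 0
    rw [h0, eval_C] at h1 h2
    nlinarith [sq_nonneg (a^2), pow_pos (zero_lt_one.trans ha) 4]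
  have hh : hpq p q a ≠ 0 := by
    rintro h0
    simp [h0] at hd
  have hK : K = 0 := by
    by_contra hK
    have h1 := totalDegree_mul_of_isDomain hK hh
    have h2 : (∑ i, R i * pderiv i (hpq p q a)).totalDegree ≤ (hpq p q a).totalDegree := by
      refine totalDegree_finsetSum_le fun i _ => ?_
      have := totalDegree_mul (R i) (pderiv i (hpq p q a))
      have := aux_totalDegree_pderiv i (hpq p q a)
      have := hdeg i
      omega
    rw [hinv, h1] at h2
    have h3 : K.totalDegree = 0 := by omega
    rw [totalDegree_eq_zero_iff_eq_C] at h3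
    have h4 := congrArg (eval (pt a)) (hsum.symm.trans hinv)
    rw [h3, map_mul, e3 a, eval_C] at h4
    simp [e1, e2] at h4
    exact hK (by rw [h3, h4, C_0])
  have h0 : (∑ i, R i * pderiv i (hpq p q a)) = 0 := by rw [hinv, hK, zero_mul]
  exact ⟨hK, hsum ▸ h0, h0⟩
end

section
/- Let X = Σ_{i=1}^n Rᵢ ∂/∂xᵢ be a polynomial vector field of degree at most two defined on S_{p,q}, with X h = K h, and write Rᵢ = Σ_{1≤j≤k≤n} βᵢ(j,k) xⱼxₖ + Σ_{j=1}^n βᵢⱼ xⱼ + βᵢ₀ (βᵢ(j,k) is the coefficient of xⱼxₖ in Rᵢ, with j ≤ k) and K = Σ_{s=1}^n αₛ xₛ + α₀. Then: (i) α₀ = 0 and αᵢ = 0 for all 1 ≤ i ≤ p+1, so K = α_{p+2}x_{p+2} + ⋯ + αₙxₙ; (ii) βᵢⱼ + βⱼᵢ = 0 whenever i,j ∈ {1,…,p+1} and whenever i,j ∈ {p+2,…,n}; (iii) βᵢ₀ = 0 for i ∈ {1,…,p+1}, and β_{l0} = ((a⁴−1)/2)·α_l for l ∈ {p+2,…,n};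 (iv) βᵢ(i,i) = αᵢ/4 for i ≤ p+1, β_l(i,i) = −a²α_l/2 for i ≤ p+1 and l ≥ p+2, and β_l(l,l) = α_l/2 for l ≥ p+2; (v) for pairwise distinct i,j,k ∈ {1,…,p+1}: βᵢ(j,k) + βⱼ(i,k) + βₖ(i,j) = 0, and for pairwise distinct l,m,r ∈ {p+2,…,n}: β_l(m,r) + β_m(l,r) + β_r(l,m) = 0; (vi) for distinct i,j ∈ {1,…,p+1} and l ∈ {p+2,…,n}: βᵢ(j,l) + βⱼ(i,l) = 0, and for distinct l,m ∈ {p+2,…,n} and j ∈ {1,…,p+1}: β_l(j,m) + β_m(j,l) = 0; (vii) for distinct i,j ∈ {1,…,p+1}: 4(βᵢ(j,j) + βⱼ(i,j)) = αᵢ, and for distinct l,m ∈ {p+2,…,n}: 2(β_l(m,m) + β_m(l,m)) = α_l. -/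
open MvPolynomial

/-- `β_f(j,k)`: the coefficient of the monomial `xⱼxₖ` (of `xⱼ²` when `j = k`) in `f`. -/
noncomputable def quadCoeff {n : ℕ} (f : MvPolynomial (Fin n) ℝ) (j k : Fin n) : ℝ :=
  MvPolynomial.coeff (Finsupp.single j 1 + Finsupp.single k 1) f

/-- `β_fj`: the coefficient of the monomial `xⱼ` in `f`. -/
noncomputable def linCoeff {n : ℕ} (f : MvPolynomial (Fin n) ℝ) (j : Fin n) : ℝ :=
  MvPolynomial.coeff (Finsupp.single j 1) f

/-- `β_f0`: the constant coefficient of `f`. -/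
noncomputable def constCoeff {n : ℕ} (f : MvPolynomial (Fin n) ℝ) : ℝ :=
  MvPolynomial.coeff 0 f

namespace Stmt3Aux

/-- Coefficients of `∑ Xᵢ Tᵢ`. -/
lemma coeff_sum_X {n : ℕ} (T : Fin n → MvPolynomial (Fin n) ℝ) (m : Fin n →₀ ℕ) :
    coeff m (∑ i, X i * T i) = ∑ i ∈ m.support, coeff (m - Finsupp.single i 1) (T i) := by
  rw [coeff_sum]
  simp only [coeff_X_mul']
  rw [← Finset.sum_filter]
  congr 1
  ext i
  simp

lemma lin_of {n : ℕ} (T : Fin n → MvPolynomial (Fin n) ℝ) (i : Fin n) :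
    linCoeff (∑ i, X i * T i) i = constCoeff (T i) := by
  have hs : (Finsupp.single i 1 : Fin n →₀ ℕ).support = {i} := by
    ext x; simp [Finsupp.single_apply, eq_comm]
  unfold linCoeff constCoeff
  rw [coeff_sum_X, hs, Finset.sum_singleton]
  simp

lemma quad_of_ne {n : ℕ} (T : Fin n → MvPolynomial (Fin n) ℝ) (i j : Fin n) (hij : i ≠ j) :
    quadCoeff (∑ i, X i * T i) i j = linCoeff (T i) j + linCoeff (T j) i := by
  have hs : (Finsupp.single i 1 + Finsupp.single j 1 : Fin n →₀ ℕ).support = {i, j} := by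
    ext x; simp [Finsupp.single_apply, eq_comm]; tauto
  unfold linCoeff quadCoeff
  rw [coeff_sum_X, hs, Finset.sum_pair hij]
  simp

lemma quad_of_eq {n : ℕ} (T : Fin n → MvPolynomial (Fin n) ℝ) (i : Fin n) :
    quadCoeff (∑ i, X i * T i) i i = linCoeff (T i) i := by
  have hs : (Finsupp.single i 1 + Finsupp.single i 1 : Fin n →₀ ℕ).support = {i} := by
    ext x; simp [Finsupp.single_apply, eq_comm]
  unfold linCoeff quadCoeff
  rw [coeff_sum_X, hs, Finset.sum_singleton]
  simp

lemma cub_ne {n : ℕ} (T : Fin n → MvPolynomial (Fin n) ℝ) (hT : ∑ i, X i * T i = 0)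
    (i j k : Fin n) (hij : i ≠ j) (hjk : j ≠ k) (hik : i ≠ k) :
    quadCoeff (T i) j k + quadCoeff (T j) i k + quadCoeff (T k) i j = 0 := by
  have hs : (Finsupp.single i 1 + Finsupp.single j 1 + Finsupp.single k 1 : Fin n →₀ ℕ).support
      = {i, j, k} := by
    ext x; simp [Finsupp.single_apply, eq_comm]; tauto
  have h := coeff_sum_X T (Finsupp.single i 1 + Finsupp.single j 1 + Finsupp.single k 1)
  rw [hT, hs, Finset.sum_insert (by simp [hij, hik]), Finset.sum_pair hjk] at h
  have e1 : (Finsupp.single i 1 + Finsupp.single j 1 + Finsupp.single k 1 : Fin n →₀ ℕ)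
      - Finsupp.single i 1 = Finsupp.single j 1 + Finsupp.single k 1 := by
    rw [add_assoc, add_tsub_cancel_left]
  have e2 : (Finsupp.single i 1 + Finsupp.single j 1 + Finsupp.single k 1 : Fin n →₀ ℕ)
      - Finsupp.single j 1 = Finsupp.single i 1 + Finsupp.single k 1 := by
    rw [add_right_comm, add_tsub_cancel_right]
  have e3 : (Finsupp.single i 1 + Finsupp.single j 1 + Finsupp.single k 1 : Fin n →₀ ℕ)
      - Finsupp.single k 1 = Finsupp.single i 1 + Finsupp.single j 1 := by
    rw [add_tsub_cancel_right]
  rw [e1, e2, e3, coeff_zero] at h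
  unfold quadCoeff
  linarith

lemma cub_pair {n : ℕ} (T : Fin n → MvPolynomial (Fin n) ℝ) (hT : ∑ i, X i * T i = 0)
    (i j : Fin n) (hij : i ≠ j) :
    quadCoeff (T i) j j + quadCoeff (T j) i j = 0 := by
  have hs : (Finsupp.single i 1 + Finsupp.single j 1 + Finsupp.single j 1 : Fin n →₀ ℕ).support
      = {i, j} := by
    ext x; simp [Finsupp.single_apply, eq_comm]; tauto
  have h := coeff_sum_X T (Finsupp.single i 1 + Finsupp.single j 1 + Finsupp.single j 1)
  rw [hT, hs, Finset.sum_pair hij, add_tsub_cancel_right, add_assoc, add_tsub_cancel_left,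
    coeff_zero] at h
  unfold quadCoeff
  linarith

lemma cub_eq {n : ℕ} (T : Fin n → MvPolynomial (Fin n) ℝ) (hT : ∑ i, X i * T i = 0)
    (i : Fin n) : quadCoeff (T i) i i = 0 := by
  have hs : (Finsupp.single i 1 + Finsupp.single i 1 + Finsupp.single i 1 : Fin n →₀ ℕ).support
      = {i} := by
    ext x; simp [Finsupp.single_apply, eq_comm]
  have h := coeff_sum_X T (Finsupp.single i 1 + Finsupp.single i 1 + Finsupp.single i 1)
  rw [hT, hs, Finset.sum_singleton, add_tsub_cancel_right, coeff_zero] at h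
  exact h.symm

lemma quad_X_mul {n : ℕ} (f : MvPolynomial (Fin n) ℝ) (i j k : Fin n) :
    quadCoeff (X i * f) j k = if i = j then linCoeff f k else if i = k then linCoeff f j else 0 := by
  unfold quadCoeff linCoeff
  rw [coeff_X_mul']
  by_cases h1 : i = j
  · subst h1; simp
  · by_cases h2 : i = k
    · subst h2; simp [h1]
    · have h3 : j ≠ i := fun h => h1 h.symm
      have h4 : k ≠ i := fun h => h2 h.symm
      simp [h1, h2, Finsupp.single_apply, h3, h4]

lemma quad_add {n : ℕ} (f g : MvPolynomial (Fin n) ℝ) (j k : Fin n) :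
    quadCoeff (f + g) j k = quadCoeff f j k + quadCoeff g j k := coeff_add _ _ _
lemma quad_sub {n : ℕ} (f g : MvPolynomial (Fin n) ℝ) (j k : Fin n) :
    quadCoeff (f - g) j k = quadCoeff f j k - quadCoeff g j k := coeff_sub _ _ _ _
lemma quad_C_mul {n : ℕ} (c : ℝ) (g : MvPolynomial (Fin n) ℝ) (j k : Fin n) :
    quadCoeff (C c * g) j k = c * quadCoeff g j k := coeff_C_mul _ _ _

lemma quad_hom {n : ℕ} (f : MvPolynomial (Fin n) ℝ) (j k : Fin n) :
    quadCoeff (homogeneousComponent 2 f) j k = quadCoeff f j k := by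
  unfold quadCoeff
  rw [coeff_homogeneousComponent, if_pos]
  simp [map_add, Finsupp.degree_single]

lemma lin_hom {n : ℕ} (f : MvPolynomial (Fin n) ℝ) (j : Fin n) :
    linCoeff (homogeneousComponent 1 f) j = linCoeff f j := by
  unfold linCoeff
  rw [coeff_homogeneousComponent, if_pos]
  simp [Finsupp.degree_single]

lemma eval_smul_hom {n d : ℕ} (f : MvPolynomial (Fin n) ℝ) (t : ℝ) (x : Fin n → ℝ) :
    eval (fun i => t * x i) (homogeneousComponent d f) =
      t ^ d * eval x (homogeneousComponent d f) := by
  have h := homogeneousComponent_isHomogeneous d f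
  rw [eval_eq, eval_eq, Finset.mul_sum]
  refine Finset.sum_congr rfl fun m hm => ?_
  have hd : ∑ i ∈ m.support, m i = d := by
    have := h (mem_support_iff.mp hm)
    rw [← this, Finsupp.weight_apply, Finsupp.sum]; simp
  simp only [mul_pow]
  rw [Finset.prod_mul_distrib, Finset.prod_pow_eq_pow_sum, hd]
  ring

lemma eval_deg_two {n : ℕ} (f : MvPolynomial (Fin n) ℝ) (hf : f.totalDegree ≤ 2) (t : ℝ)
    (x : Fin n → ℝ) :
    eval (fun i => t * x i) f = constCoeff f + t * eval x (homogeneousComponent 1 f)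
      + t ^ 2 * eval x (homogeneousComponent 2 f) := by
  have h : ∑ k ∈ Finset.range 3, homogeneousComponent k f = f := by
    conv_rhs => rw [← sum_homogeneousComponent f]
    symm
    apply Finset.sum_subset
    · intro k; simp; omega
    · intro k _ hk
      apply homogeneousComponent_eq_zero
      simp at hk; omega
  conv_lhs => rw [← h]
  rw [map_sum]
  simp only [Finset.sum_range_succ, Finset.sum_range_zero, eval_smul_hom]
  rw [homogeneousComponent_zero, eval_C]
  unfold constCoeff
  ring

lemma eval_deg_one {n : ℕ} (f : MvPolynomial (Fin n) ℝ) (hf : f.totalDegree ≤ 1) (t : ℝ)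
    (x : Fin n → ℝ) :
    eval (fun i => t * x i) f = constCoeff f + t * eval x (homogeneousComponent 1 f) := by
  rw [eval_deg_two f (by omega), homogeneousComponent_eq_zero 2 f (by omega)]
  simp

/-- Indicator of the first block. -/
noncomputable def w (p q : ℕ) (i : Fin (p+q+1)) : ℝ := if (i:ℕ) < p+1 then 1 else 0

noncomputable def U (p q : ℕ) : MvPolynomial (Fin (p+q+1)) ℝ := ∑ i, X i * (C (w p q i) * X i)
noncomputable def V (p q : ℕ) : MvPolynomial (Fin (p+q+1)) ℝ := ∑ i, X i * (C (1 - w p q i) * X i)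

lemma sum1 (p q : ℕ) : (∑ i : Fin (p+1), (X (idx1 p q i) : MvPolynomial (Fin (p+q+1)) ℝ) ^ 2)
    = U p q := by
  unfold U w
  have : ∀ i : Fin (p+q+1), (X i : MvPolynomial (Fin (p+q+1)) ℝ) *
      (C (if (i:ℕ) < p+1 then (1:ℝ) else 0) * X i) = if (i:ℕ) < p+1 then X i ^ 2 else 0 := by
    intro i; split_ifs <;> simp [pow_two]
  simp only [this]
  rw [← Finset.sum_filter]
  refine Finset.sum_bij (fun i _ => idx1 p q i) ?_ ?_ ?_ ?_
  · intro i _; simp [idx1]; omega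
  · intro i _ j _ h; simpa [idx1, Fin.ext_iff] using h
  · intro b hb
    refine ⟨⟨b, by simpa using hb⟩, Finset.mem_univ _, ?_⟩
    simp [idx1, Fin.ext_iff]
  · intros; rfl

lemma sum2 (p q : ℕ) : (∑ i : Fin q, (X (idx2 p q i) : MvPolynomial (Fin (p+q+1)) ℝ) ^ 2)
    = V p q := by
  unfold V w
  have : ∀ i : Fin (p+q+1), (X i : MvPolynomial (Fin (p+q+1)) ℝ) *
      (C (1 - if (i:ℕ) < p+1 then (1:ℝ) else 0) * X i) = if p+1 ≤ (i:ℕ) then X i ^ 2 else 0 := by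
    intro i
    by_cases h : (i:ℕ) < p+1
    · rw [if_pos h, if_neg (by omega)]; simp
    · rw [if_neg h, if_pos (by omega)]; simp [pow_two]
  simp only [this]
  rw [← Finset.sum_filter]
  refine Finset.sum_bij (fun i _ => idx2 p q i) ?_ ?_ ?_ ?_
  · intro i _; simp [idx2]; omega
  · intro i _ j _ h; simpa [idx2, Fin.ext_iff] using h
  · intro b hb
    have hb' : p + 1 ≤ (b:ℕ) := by simpa using hb
    have := b.2
    refine ⟨⟨b - (p+1), by omega⟩, Finset.mem_univ _, ?_⟩
    simp only [idx2, Fin.ext_iff]; omega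
  · intros; rfl

lemma pderiv_diag {n : ℕ} (c : Fin n → ℝ) (i : Fin n) :
    pderiv i (∑ j, X j * (C (c j) * X j) : MvPolynomial (Fin n) ℝ) = C (2 * c i) * X i := by
  rw [map_sum, Finset.sum_eq_single i]
  · simp only [Derivation.leibniz, pderiv_X_self, pderiv_C, smul_eq_mul, map_mul]
    have : (C 2 : MvPolynomial (Fin n) ℝ) = 2 := rfl
    rw [this]; ring
  · intro j _ hj
    simp [Derivation.leibniz, pderiv_X_of_ne hj]
  · simp

lemma hpq_eq (p q : ℕ) (a : ℝ) : hpq p q a = (U p q - C (a^2))^2 + V p q - 1 := by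
  unfold hpq; rw [sum1, sum2]

lemma pderiv_h (p q : ℕ) (a : ℝ) (i : Fin (p+q+1)) :
    pderiv i (hpq p q a) = C (4 * w p q i) * X i * (U p q - C (a^2)) + C (2 * (1 - w p q i)) * X i := by
  rw [hpq_eq, map_sub, map_add, pderiv_one, Derivation.leibniz_pow, map_sub, pderiv_C]
  have h1 : pderiv i (U p q) = C (2 * w p q i) * X i := pderiv_diag _ i
  have h2 : pderiv i (V p q) = C (2 * (1 - w p q i)) * X i := pderiv_diag _ i
  rw [h1, h2]
  have : (C (4 * w p q i) : MvPolynomial (Fin (p+q+1)) ℝ) = 2 * C (2 * w p q i) := by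
    rw [show (4 * w p q i) = 2 * (2 * w p q i) by ring, map_mul]; rfl
  rw [this]
  simp
  ring

lemma poly_zero {c0 c1 c2 c3 c4 c5 : ℝ}
    (h : ∀ t : ℝ, c0 + c1 * t + c2 * t^2 + c3 * t^3 + c4 * t^4 + c5 * t^5 = 0) :
    c0 = 0 ∧ c1 = 0 ∧ c2 = 0 ∧ c3 = 0 ∧ c4 = 0 ∧ c5 = 0 := by
  have h0 := h 0
  have h1 := h 1
  have h2 := h (-1)
  have h3 := h 2
  have h4 := h (-2)
  have h5 := h 3
  norm_num at h0 h1 h2 h3 h4 h5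
  subst h0
  refine ⟨rfl, ?_, ?_, ?_, ?_, ?_⟩ <;> linarith

lemma w_lt {p q : ℕ} {i : Fin (p+q+1)} (h : (i:ℕ) < p+1) : w p q i = 1 := if_pos h
lemma w_ge {p q : ℕ} {i : Fin (p+q+1)} (h : p+1 ≤ (i:ℕ)) : w p q i = 0 := if_neg (by omega)
lemma w_nonneg (p q : ℕ) (i : Fin (p+q+1)) : 0 ≤ w p q i := by
  unfold w; split_ifs <;> norm_num

lemma eval_U (p q : ℕ) (x : Fin (p+q+1) → ℝ) : eval x (U p q) = ∑ i, x i * (w p q i * x i) := by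
  simp [U]
lemma eval_V (p q : ℕ) (x : Fin (p+q+1) → ℝ) :
    eval x (V p q) = ∑ i, x i * ((1 - w p q i) * x i) := by
  simp [V]

lemma quad_U (p q : ℕ) (i j : Fin (p+q+1)) :
    quadCoeff (U p q) i j = if i = j then w p q i else 0 := by
  have hl : ∀ i j : Fin (p+q+1), linCoeff (C (w p q i) * X i) j = if i = j then w p q i else 0 := by
    intro i j
    unfold linCoeff
    rw [coeff_C_mul, coeff_X']
    by_cases h : i = j
    · simp [h]
    · have : ¬ (Finsupp.single i 1 = (Finsupp.single j 1 : Fin (p+q+1) →₀ ℕ)) := by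
        simpa [Finsupp.single_left_inj] using h
      rw [if_neg this, if_neg h, mul_zero]
  unfold U
  by_cases h : i = j
  · subst h; rw [quad_of_eq, hl]
  · rw [quad_of_ne _ _ _ h, hl, hl, if_neg h, if_neg (Ne.symm h)]; simp

section Main
variable (p q : ℕ) (a : ℝ) (R : Fin (p+q+1) → MvPolynomial (Fin (p+q+1)) ℝ)
    (K : MvPolynomial (Fin (p+q+1)) ℝ)

/-- Degree by degree comparison of the values at a point. -/
lemma key (hdeg : ∀ i, (R i).totalDegree ≤ 2) (hKdeg : K.totalDegree ≤ 1)
    (hinv : (∑ i, R i * pderiv i (hpq p q a)) = K * hpq p q a)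
    (x : Fin (p+q+1) → ℝ) (A1 A2 A3 B1 B2 B3 u v k1 : ℝ)
    (hA1 : A1 = ∑ i, w p q i * x i * constCoeff (R i))
    (hA2 : A2 = ∑ i, w p q i * x i * eval x (homogeneousComponent 1 (R i)))
    (hA3 : A3 = ∑ i, w p q i * x i * eval x (homogeneousComponent 2 (R i)))
    (hB1 : B1 = ∑ i, (1 - w p q i) * x i * constCoeff (R i))
    (hB2 : B2 = ∑ i, (1 - w p q i) * x i * eval x (homogeneousComponent 1 (R i)))
    (hB3 : B3 = ∑ i, (1 - w p q i) * x i * eval x (homogeneousComponent 2 (R i)))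
    (hu : u = eval x (U p q)) (hv : v = eval x (V p q))
    (hk : k1 = eval x (homogeneousComponent 1 K)) :
    constCoeff K * (a^4 - 1) = 0 ∧
    -4 * a^2 * A1 + 2 * B1 = k1 * (a^4 - 1) ∧
    -4 * a^2 * A2 + 2 * B2 = constCoeff K * (v - 2 * a^2 * u) ∧
    4 * u * A1 - 4 * a^2 * A3 + 2 * B3 = k1 * (v - 2 * a^2 * u) ∧
    4 * A2 = constCoeff K * u ∧
    4 * A3 = k1 * u := by
  have hmain : ∀ t : ℝ, 4 * (t^2 * u - a^2) * (t * A1 + t^2 * A2 + t^3 * A3)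
      + 2 * (t * B1 + t^2 * B2 + t^3 * B3)
      = (constCoeff K + t * k1) * ((t^2 * u - a^2)^2 + t^2 * v - 1) := by
    intro t
    have h := congrArg (eval (fun i => t * x i)) hinv
    have hu' : eval (fun i => t * x i) (U p q) = t^2 * u := by
      rw [hu, eval_U, eval_U, Finset.mul_sum]
      exact Finset.sum_congr rfl fun i _ => by ring
    have hv' : eval (fun i => t * x i) (V p q) = t^2 * v := by
      rw [hv, eval_V, eval_V, Finset.mul_sum]
      exact Finset.sum_congr rfl fun i _ => by ring
    simp only [pderiv_h] at h
    rw [map_mul, hpq_eq, map_sum] at h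
    simp only [map_mul, eval_X, eval_deg_two _ (hdeg _), map_add, map_sub, map_pow, map_one, eval_C, hu', hv', eval_deg_one K hKdeg,
      ← hk] at h
    rw [← h, hA1, hA2, hA3, hB1, hB2, hB3]
    simp only [Finset.mul_sum, ← Finset.sum_add_distrib]
    exact Finset.sum_congr rfl fun i _ => by ring
  have hp := poly_zero (c0 := constCoeff K * (a^4 - 1))
    (c1 := k1 * (a^4 - 1) - (-4 * a^2 * A1 + 2 * B1))
    (c2 := constCoeff K * (v - 2 * a^2 * u) - (-4 * a^2 * A2 + 2 * B2))
    (c3 := k1 * (v - 2 * a^2 * u) - (4 * u * A1 - 4 * a^2 * A3 + 2 * B3))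
    (c4 := constCoeff K * u^2 - 4 * u * A2) (c5 := k1 * u^2 - 4 * u * A3)
    (fun t => by linear_combination - hmain t)
  obtain ⟨h0, h1, h2, h3, h4, h5⟩ := hp
  have hz : u = 0 → ∀ i, w p q i * x i = 0 := by
    intro h0 i
    rw [hu, eval_U, Finset.sum_eq_zero_iff_of_nonneg] at h0
    · have := h0 i (Finset.mem_univ _)
      have h' : x i = 0 ∨ w p q i * x i = 0 := mul_eq_zero.mp this
      rcases h' with h' | h'
      · simp [h']
      · exact h'
    · intro i _
      have := mul_nonneg (w_nonneg p q i) (mul_self_nonneg (x i))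
      linarith
  refine ⟨h0, by linarith, by linarith, by linarith, ?_, ?_⟩
  · by_cases hu0 : u = 0
    · rw [hA2, Finset.sum_eq_zero (fun i _ => by rw [hz hu0 i, zero_mul]), hu0]; ring
    · exact mul_left_cancel₀ hu0 (by linarith)
  · by_cases hu0 : u = 0
    · rw [hA3, Finset.sum_eq_zero (fun i _ => by rw [hz hu0 i, zero_mul]), hu0]; ring
    · exact mul_left_cancel₀ hu0 (by linarith)

end Main

lemma C_sum_lin {n : ℕ} (c : ℝ) (f : MvPolynomial (Fin n) ℝ) (i : Fin n) :
    linCoeff (C c * f) i = c * linCoeff f i := coeff_C_mul _ _ _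

end Stmt3Aux

/-- Characterization of the coefficients of a degree-two polynomial vector field
`X = Σ Rᵢ ∂/∂xᵢ` defined on `S_{p,q}` with cofactor `K = Σ αₛ xₛ + α₀`.
Here `quadCoeff (R i) j k = βᵢ(j,k)`, `linCoeff (R i) j = βᵢⱼ`,
`constCoeff (R i) = βᵢ₀`, `linCoeff K s = αₛ` and `constCoeff K = α₀`;
indices `< p+1` correspond to `x₁,…,x_{p+1}` and indices `≥ p+1` to `x_{p+2},…,x_n`. -/
theorem stmt3 (p q : ℕ) (hp : 1 ≤ p) (hq : 1 ≤ q) (a : ℝ) (ha : 1 < a)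
    (R : Fin (p+q+1) → MvPolynomial (Fin (p+q+1)) ℝ)
    (hdeg : ∀ i, (R i).totalDegree ≤ 2)
    (K : MvPolynomial (Fin (p+q+1)) ℝ)
    (hKdeg : K.totalDegree ≤ 1)
    (hinv : (∑ i, R i * pderiv i (hpq p q a)) = K * hpq p q a) :
    -- (i) α₀ = 0 and αᵢ = 0 for 1 ≤ i ≤ p+1
    (constCoeff K = 0 ∧ ∀ i : Fin (p+q+1), (i:ℕ) < p+1 → linCoeff K i = 0) ∧
    -- (ii) βᵢⱼ + βⱼᵢ = 0 on both blocks
    (∀ i j : Fin (p+q+1),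
      (((i:ℕ) < p+1 ∧ (j:ℕ) < p+1) ∨ (p+1 ≤ (i:ℕ) ∧ p+1 ≤ (j:ℕ))) →
      linCoeff (R i) j + linCoeff (R j) i = 0) ∧
    -- (iii) constant terms
    ((∀ i : Fin (p+q+1), (i:ℕ) < p+1 → constCoeff (R i) = 0) ∧
     (∀ l : Fin (p+q+1), p+1 ≤ (l:ℕ) →
        constCoeff (R l) = (a^4 - 1)/2 * linCoeff K l)) ∧
    -- (iv) diagonal quadratic coefficients
    ((∀ i : Fin (p+q+1), (i:ℕ) < p+1 → quadCoeff (R i) i i = linCoeff K i / 4) ∧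
     (∀ i l : Fin (p+q+1), (i:ℕ) < p+1 → p+1 ≤ (l:ℕ) →
        quadCoeff (R l) i i = -(a^2) * linCoeff K l / 2) ∧
     (∀ l : Fin (p+q+1), p+1 ≤ (l:ℕ) → quadCoeff (R l) l l = linCoeff K l / 2)) ∧
    -- (v) pairwise distinct triples within each block
    ((∀ i j k : Fin (p+q+1), i ≠ j → j ≠ k → i ≠ k →
        (i:ℕ) < p+1 → (j:ℕ) < p+1 → (k:ℕ) < p+1 →
        quadCoeff (R i) j k + quadCoeff (R j) i k + quadCoeff (R k) i j = 0) ∧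
     (∀ l m r : Fin (p+q+1), l ≠ m → m ≠ r → l ≠ r →
        p+1 ≤ (l:ℕ) → p+1 ≤ (m:ℕ) → p+1 ≤ (r:ℕ) →
        quadCoeff (R l) m r + quadCoeff (R m) l r + quadCoeff (R r) l m = 0)) ∧
    -- (vi) mixed triples
    ((∀ i j l : Fin (p+q+1), i ≠ j → (i:ℕ) < p+1 → (j:ℕ) < p+1 → p+1 ≤ (l:ℕ) →
        quadCoeff (R i) j l + quadCoeff (R j) i l = 0) ∧
     (∀ l m j : Fin (p+q+1), l ≠ m → p+1 ≤ (l:ℕ) → p+1 ≤ (m:ℕ) → (j:ℕ) < p+1 →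
        quadCoeff (R l) j m + quadCoeff (R m) j l = 0)) ∧
    -- (vii) repeated-index pairs
    ((∀ i j : Fin (p+q+1), i ≠ j → (i:ℕ) < p+1 → (j:ℕ) < p+1 →
        4 * (quadCoeff (R i) j j + quadCoeff (R j) i j) = linCoeff K i) ∧
     (∀ l m : Fin (p+q+1), l ≠ m → p+1 ≤ (l:ℕ) → p+1 ≤ (m:ℕ) →
        2 * (quadCoeff (R l) m m + quadCoeff (R m) l m) = linCoeff K l)) := by

  have hk := fun x => Stmt3Aux.key p q a R K hdeg hKdeg hinv x _ _ _ _ _ _ _ _ _ rfl rfl rfl rfl rfl rfl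
    rfl rfl rfl
  have ha2 : 1 < a^2 := by nlinarith
  have ha4 : a^4 - 1 ≠ 0 := by
    have : 1 < a^4 := by nlinarith
    linarith
  have hK0 : constCoeff K = 0 := by
    have := (hk 0).1
    rcases mul_eq_zero.mp this with h | h
    · exact h
    · exact absurd h ha4
  simp only [hK0, zero_mul] at hk
  -- the identities between polynomials
  have E1 : (∑ i, X i * C ((-4 * a^2 * Stmt3Aux.w p q i + 2 * (1 - Stmt3Aux.w p q i))
      * constCoeff (R i))) = C (a^4 - 1) * homogeneousComponent 1 K := by
    apply MvPolynomial.funext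
    intro x
    have h := (hk x).2.1
    simp only [map_sum, map_mul, eval_X, eval_C]
    rw [mul_comm (a^4 - 1), ← h]
    simp only [Finset.mul_sum, ← Finset.sum_add_distrib]
    exact Finset.sum_congr rfl fun i _ => by ring
  have E2a : (∑ i, X i * (C (Stmt3Aux.w p q i) * homogeneousComponent 1 (R i))) = 0 := by
    apply MvPolynomial.funext
    intro x
    have h := (hk x).2.2.2.2.1
    have h' := (mul_eq_zero.mp h).resolve_left (by norm_num)
    simp only [map_sum, map_mul, eval_X, eval_C, map_zero]
    rw [← h']
    exact Finset.sum_congr rfl fun i _ => by ring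
  have E2b : (∑ i, X i * (C (1 - Stmt3Aux.w p q i) * homogeneousComponent 1 (R i))) = 0 := by
    apply MvPolynomial.funext
    intro x
    have h := (hk x).2.2.2.2.1
    have h' := (mul_eq_zero.mp h).resolve_left (by norm_num)
    have h2 := (hk x).2.2.1
    rw [h', mul_zero, zero_add] at h2
    have h2' := (mul_eq_zero.mp h2).resolve_left (by norm_num)
    simp only [map_sum, map_mul, eval_X, eval_C, map_zero]
    rw [← h2']
    exact Finset.sum_congr rfl fun i _ => by ring
  have E5 : (∑ i, X i * (C (4 * Stmt3Aux.w p q i) * homogeneousComponent 2 (R i)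
      - C (Stmt3Aux.w p q i) * (X i * homogeneousComponent 1 K))) = 0 := by
    apply MvPolynomial.funext
    intro x
    have h := (hk x).2.2.2.2.2
    rw [Stmt3Aux.eval_U, ← sub_eq_zero] at h
    simp only [map_sum, map_mul, eval_X, eval_C, map_zero, map_sub]
    rw [← h]
    simp only [Finset.mul_sum, ← Finset.sum_sub_distrib]
    exact Finset.sum_congr rfl fun i _ => by ring
  have E3 : (∑ i, X i * (C (4 * Stmt3Aux.w p q i * constCoeff (R i)) * Stmt3Aux.U p q
      + C (2 * (1 - Stmt3Aux.w p q i) - 4 * a^2 * Stmt3Aux.w p q i)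
        * homogeneousComponent 2 (R i)
      - C (1 - Stmt3Aux.w p q i - 2 * a^2 * Stmt3Aux.w p q i)
        * (X i * homogeneousComponent 1 K))) = 0 := by
    apply MvPolynomial.funext
    intro x
    have h := (hk x).2.2.2.1
    rw [← sub_eq_zero] at h
    simp only [map_sum, map_mul, eval_X, eval_C, map_zero, map_sub, map_add]
    rw [← h]
    generalize eval x (homogeneousComponent 1 K) = k1
    rw [mul_sub k1, Stmt3Aux.eval_V]
    have hUU : k1 * (2 * a^2 * eval x (Stmt3Aux.U p q))
        = ∑ i, k1 * (2 * a^2 * (x i * (Stmt3Aux.w p q i * x i))) := by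
      rw [Stmt3Aux.eval_U]; simp only [Finset.mul_sum]
    rw [hUU]
    generalize eval x (Stmt3Aux.U p q) = u
    simp only [Finset.mul_sum, ← Finset.sum_sub_distrib, ← Finset.sum_add_distrib]
    exact Finset.sum_congr rfl fun i _ => by ring
  -- coefficient extraction
  have e1 : ∀ i, (-4 * a^2 * Stmt3Aux.w p q i + 2 * (1 - Stmt3Aux.w p q i)) * constCoeff (R i)
      = (a^4 - 1) * linCoeff K i := by
    intro i
    have h := congrArg (fun f => linCoeff f i) E1
    simp only [Stmt3Aux.lin_of, Stmt3Aux.C_sum_lin, Stmt3Aux.lin_hom] at h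
    rw [← h]; exact (coeff_zero_C _).symm
  have e2 : ∀ T : Fin (p+q+1) → MvPolynomial (Fin (p+q+1)) ℝ, (∑ i, X i * T i) = 0 →
      ∀ i j, linCoeff (T i) j + linCoeff (T j) i = 0 := by
    intro T hT i j
    by_cases hij : i = j
    · subst hij
      have h := Stmt3Aux.quad_of_eq T i
      rw [hT] at h
      simp only [quadCoeff, coeff_zero] at h
      rw [← h]; simp
    · have h := Stmt3Aux.quad_of_ne T i j hij
      rw [hT] at h
      simp only [quadCoeff, coeff_zero] at h
      exact h.symm
  have e2a := e2 _ E2a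
  have e2b := e2 _ E2b
  simp only [Stmt3Aux.C_sum_lin, Stmt3Aux.lin_hom] at e2a e2b
  have e5c := Stmt3Aux.cub_eq _ E5
  have e5p := Stmt3Aux.cub_pair _ E5
  have e5t := Stmt3Aux.cub_ne _ E5
  have e3c := Stmt3Aux.cub_eq _ E3
  have e3p := Stmt3Aux.cub_pair _ E3
  have e3t := Stmt3Aux.cub_ne _ E3
  simp only [Stmt3Aux.quad_add, Stmt3Aux.quad_sub, Stmt3Aux.quad_C_mul, Stmt3Aux.quad_hom,
    Stmt3Aux.quad_X_mul, Stmt3Aux.lin_hom, Stmt3Aux.quad_U] at e5c e5p e5t e3c e3p e3t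
  have hblock : ∀ i : Fin (p+q+1), (i:ℕ) < p+1 → linCoeff K i = 0 ∧ constCoeff (R i) = 0 := by
    intro i hi
    have h1 := e1 i
    have h2 := e5c i
    have h3 := e3c i
    simp only [Stmt3Aux.w_lt hi, if_true] at h1 h2 h3
    have h4 : linCoeff K i = 0 := by linear_combination h1 + a^2 * h3 + a^4 * h2
    refine ⟨h4, ?_⟩
    rw [h4] at h2 h3
    linear_combination h3 / 4 + a^2 / 4 * h2
  refine ⟨⟨hK0, fun i hi => (hblock i hi).1⟩, ?_, ⟨fun i hi => (hblock i hi).2, ?_⟩,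
    ⟨?_, ?_, ?_⟩, ⟨?_, ?_⟩, ⟨?_, ?_⟩, ⟨?_, ?_⟩⟩
  · rintro i j (⟨hi, hj⟩ | ⟨hi, hj⟩)
    · have h := e2a i j
      simpa [Stmt3Aux.w_lt hi, Stmt3Aux.w_lt hj] using h
    · have h := e2b i j
      simpa [Stmt3Aux.w_ge hi, Stmt3Aux.w_ge hj] using h
  · intro l hl
    have h := e1 l
    rw [Stmt3Aux.w_ge hl] at h
    linarith
  · intro i hi
    have h := e5c i
    simp only [Stmt3Aux.w_lt hi, if_true] at h
    linarith
  · intro i l hi hl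
    have hne : l ≠ i := by rintro rfl; omega
    have h3 := e3p l i hne
    have h5 := e5p l i hne
    simp only [Stmt3Aux.w_lt hi, Stmt3Aux.w_ge hl, if_true, if_neg hne, if_neg hne.symm,
      (hblock i hi).1, (hblock i hi).2] at h3 h5
    linear_combination h3 / 2 + a^2 / 2 * h5
  · intro l hl
    have h := e3c l
    simp only [Stmt3Aux.w_ge hl, if_true] at h
    linarith
  · intro i j k hij hjk hik hi hj hk
    have h := e5t i j k hij hjk hik
    simp only [Stmt3Aux.w_lt hi, Stmt3Aux.w_lt hj, Stmt3Aux.w_lt hk, if_neg hij, if_neg hjk,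
      if_neg hik, if_neg hij.symm, if_neg hjk.symm, if_neg hik.symm] at h
    linarith
  · intro i j k hij hjk hik hi hj hk
    have h := e3t i j k hij hjk hik
    simp only [Stmt3Aux.w_ge hi, Stmt3Aux.w_ge hj, Stmt3Aux.w_ge hk, if_neg hij, if_neg hjk,
      if_neg hik, if_neg hij.symm, if_neg hjk.symm, if_neg hik.symm] at h
    linarith
  · intro i j k hij hi hj hk
    have hik : i ≠ k := by rintro rfl; omega
    have hjk : j ≠ k := by rintro rfl; omega
    have h := e5t i j k hij hjk hik
    simp only [Stmt3Aux.w_lt hi, Stmt3Aux.w_lt hj, Stmt3Aux.w_ge hk, if_neg hij, if_neg hjk,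
      if_neg hik, if_neg hij.symm, if_neg hjk.symm, if_neg hik.symm] at h
    linarith
  · intro l m j hlm hl hm hj
    have hjl : j ≠ l := by rintro rfl; omega
    have hjm : j ≠ m := by rintro rfl; omega
    have h := e3t j l m hjl hlm hjm
    have h5 := e5t j l m hjl hlm hjm
    simp only [Stmt3Aux.w_ge hl, Stmt3Aux.w_ge hm, Stmt3Aux.w_lt hj, if_neg hjl, if_neg hjm,
      if_neg hlm, if_neg hjl.symm, if_neg hjm.symm, if_neg hlm.symm] at h h5
    linear_combination h / 2 + a^2 / 2 * h5
  · intro i j hij hi hj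
    have h := e5p i j hij
    simp only [Stmt3Aux.w_lt hi, Stmt3Aux.w_lt hj, if_true, if_neg hij, if_neg hij.symm] at h
    linarith
  · intro i j hij hi hj
    have h := e3p i j hij
    simp only [Stmt3Aux.w_ge hi, Stmt3Aux.w_ge hj, if_true, if_neg hij, if_neg hij.symm] at h
    linarith
end

section
/- Let p, q ≥ 2 be integers, a > 1, and let (a₁,…,a_{p+1}) ∈ ℝ^{p+1} be a nonzero vector. Then the meridian S_{p,q} ∩ {x ∈ ℝⁿ : a₁x₁ + ⋯ + a_{p+1}x_{p+1} = 0} is homeomorphic to S^{p−1} × S^q; in particular it is path connected. -/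
/-- The hypersurface `S_{p,q} ⊂ ℝ^{p+q+1}` defined by
`(x₁² + ⋯ + x_{p+1}² − a²)² + x_{p+2}² + ⋯ + x_n² = 1`. -/
def Spq (p q : ℕ) (a : ℝ) : Set (Fin (p+q+1) → ℝ) :=
  {x | ((∑ i : Fin (p+1), x (idx1 p q i) ^ 2) - a^2)^2
        + (∑ j : Fin q, x (idx2 p q j) ^ 2) = 1}

lemma exists_TP (p : ℕ) (v : EuclideanSpace ℝ (Fin (p+1))) (hv : v ≠ 0) :
    ∃ (T : EuclideanSpace ℝ (Fin p) →L[ℝ] EuclideanSpace ℝ (Fin (p+1)))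
      (P : EuclideanSpace ℝ (Fin (p+1)) →L[ℝ] EuclideanSpace ℝ (Fin p)),
      (∀ u, P (T u) = u) ∧ (∀ u, inner ℝ v (T u) = 0) ∧ (∀ u, ‖T u‖ = ‖u‖) ∧
      (∀ x, inner ℝ v x = 0 → T (P x) = x) := by
  have : Fact (Module.finrank ℝ (EuclideanSpace ℝ (Fin (p+1))) = p + 1) := ⟨by simp⟩
  let L : (ℝ ∙ v)ᗮ ≃ₗᵢ[ℝ] EuclideanSpace ℝ (Fin p) :=
    (OrthonormalBasis.fromOrthogonalSpanSingleton p hv).repr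
  refine ⟨(ℝ ∙ v)ᗮ.subtypeL.comp (L.symm.toContinuousLinearEquiv : _ →L[ℝ] _),
    (L.toContinuousLinearEquiv : _ →L[ℝ] _).comp (ℝ ∙ v)ᗮ.orthogonalProjectionOnto,
    ?_, ?_, ?_, ?_⟩
  · intro u
    simp [Submodule.orthogonalProjectionOnto_mem_subspace_eq_self]
  · intro u
    exact Submodule.mem_orthogonal_singleton_iff_inner_right.1 (L.symm u).2
  · intro u
    exact L.symm.norm_map u
  · intro x hx
    have hx' : x ∈ (ℝ ∙ v)ᗮ := Submodule.mem_orthogonal_singleton_iff_inner_right.2 hx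
    have := Submodule.orthogonalProjectionOnto_mem_subspace_eq_self (K := (ℝ ∙ v)ᗮ) ⟨x, hx'⟩
    simp only [ContinuousLinearMap.comp_apply]
    rw [this]
    simp

lemma sq_norm_fin {n : ℕ} (x : EuclideanSpace ℝ (Fin n)) : ‖x‖ ^ 2 = ∑ i, x i ^ 2 := by
  rw [EuclideanSpace.norm_sq_eq]; simp

/-- first block of coordinates -/
noncomputable def X1 (p q : ℕ) (x : Fin (p+q+1) → ℝ) : EuclideanSpace ℝ (Fin (p+1)) :=
  WithLp.toLp 2 (fun i => x (idx1 p q i))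

/-- the `S^q` component -/
noncomputable def Y1 (p q : ℕ) (a : ℝ) (x : Fin (p+q+1) → ℝ) : EuclideanSpace ℝ (Fin (q+1)) :=
  WithLp.toLp 2 (Fin.cons ((∑ i : Fin (p+1), x (idx1 p q i) ^ 2) - a^2) (fun j => x (idx2 p q j)))

/-- reassembling a point from its two blocks -/
noncomputable def Z1 (p q : ℕ) (y : EuclideanSpace ℝ (Fin (p+1)))
    (t : EuclideanSpace ℝ (Fin (q+1))) : Fin (p+q+1) → ℝ :=
  fun k => if h : (k : ℕ) < p + 1 then y ⟨k, h⟩ else t ⟨k - p, by omega⟩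

lemma Z1_idx1 (p q : ℕ) (y t) (i : Fin (p+1)) : Z1 p q y t (idx1 p q i) = y i := by
  have : ((idx1 p q i : Fin (p+q+1)) : ℕ) = i := rfl
  simp [Z1, this, Nat.lt_succ_iff.mp i.2]

lemma Z1_idx2 (p q : ℕ) (y t) (j : Fin q) : Z1 p q y t (idx2 p q j) = t j.succ := by
  have h : ((idx2 p q j : Fin (p+q+1)) : ℕ) = p + 1 + j := rfl
  have h2 : ¬ (p + 1 + (j : ℕ) < p + 1) := by omega
  simp only [Z1, h, h2, dite_false]
  have e : (⟨p + 1 + (j : ℕ) - p, by omega⟩ : Fin (q+1)) = j.succ := by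
    apply Fin.ext
    simp only [Fin.val_succ]
    omega
  rw [e]

lemma ext_idx (p q : ℕ) (x y : Fin (p+q+1) → ℝ) (h1 : ∀ i, x (idx1 p q i) = y (idx1 p q i))
    (h2 : ∀ j, x (idx2 p q j) = y (idx2 p q j)) : x = y := by
  funext k
  by_cases h : (k : ℕ) < p + 1
  · exact h1 ⟨k, h⟩
  · have := h2 ⟨k - (p + 1), by omega⟩
    have e : idx2 p q ⟨k - (p + 1), by omega⟩ = k := by
      ext; simp [idx2]; omega
    rwa [e] at this

lemma cont_X1 (p q : ℕ) : Continuous (X1 p q) := by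
  unfold X1; fun_prop

lemma cont_Y1 (p q : ℕ) (a : ℝ) : Continuous (Y1 p q a) := by
  unfold Y1
  refine (PiLp.continuous_toLp 2 _).comp (continuous_pi fun j => ?_)
  refine Fin.cases ?_ (fun j => ?_) j
  · simp only [Fin.cons_zero]; fun_prop
  · simp only [Fin.cons_succ]; fun_prop

lemma cont_Z1 (p q : ℕ) : Continuous (fun z : EuclideanSpace ℝ (Fin (p+1)) ×
    EuclideanSpace ℝ (Fin (q+1)) => Z1 p q z.1 z.2) := by
  refine continuous_pi fun k => ?_
  unfold Z1
  by_cases h : (k : ℕ) < p + 1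
  · simp only [h, dite_true]; fun_prop
  · simp only [h, dite_false]; fun_prop

lemma norm_Y1 (p q : ℕ) (a : ℝ) (x) : ‖Y1 p q a x‖ ^ 2 = (‖X1 p q x‖ ^ 2 - a^2)^2
    + ∑ j : Fin q, x (idx2 p q j) ^ 2 := by
  rw [sq_norm_fin, sq_norm_fin, Fin.sum_univ_succ]
  simp [Y1, X1]

lemma mem_Spq (p q : ℕ) (a : ℝ) (x) : x ∈ Spq p q a ↔ ‖Y1 p q a x‖ = 1 := by
  have : x ∈ Spq p q a ↔ ‖Y1 p q a x‖ ^ 2 = 1 := by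
    rw [norm_Y1, sq_norm_fin]; rfl
  rw [this]
  exact pow_eq_one_iff_of_nonneg (norm_nonneg _) two_ne_zero

lemma Y1_zero (p q : ℕ) (a : ℝ) (x) : Y1 p q a x 0 = ‖X1 p q x‖ ^ 2 - a ^ 2 := by
  rw [sq_norm_fin]; simp [Y1, X1]

lemma abs_coord_le {n : ℕ} (t : EuclideanSpace ℝ (Fin n)) (ht : ‖t‖ = 1) (i) : -1 ≤ t i := by
  have := PiLp.norm_apply_le t i
  rw [ht, Real.norm_eq_abs, abs_le] at this
  exact this.1

lemma X1_Z1 (p q : ℕ) (y t) : X1 p q (Z1 p q y t) = y := by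
  ext i; simp [X1, Z1_idx1]

lemma Y1_Z1 (p q : ℕ) (a : ℝ) (y t) (h : ‖y‖ ^ 2 = t 0 + a ^ 2) :
    Y1 p q a (Z1 p q y t) = t := by
  ext j
  refine Fin.cases ?_ (fun j => ?_) j
  · rw [Y1_zero, X1_Z1, h]; ring
  · simp [Y1, Z1_idx2]

/-- For `p, q ≥ 2` and a nonzero `(a₁,…,a_{p+1}) ∈ ℝ^{p+1}`, the meridian
`S_{p,q} ∩ {a₁x₁ + ⋯ + a_{p+1}x_{p+1} = 0}` is homeomorphic to `S^{p−1} × S^q`;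
in particular it is path connected. -/
theorem stmt5 (p q : ℕ) (hp : 2 ≤ p) (hq : 2 ≤ q) (a : ℝ) (ha : 1 < a)
    (av : Fin (p+1) → ℝ) (hav : av ≠ 0) :
    Nonempty (↥(Spq p q a ∩ {x | ∑ i : Fin (p+1), av i * x (idx1 p q i) = 0}) ≃ₜ
      (↥(Metric.sphere (0 : EuclideanSpace ℝ (Fin p)) 1) ×
       ↥(Metric.sphere (0 : EuclideanSpace ℝ (Fin (q+1))) 1))) ∧
    IsPathConnected (Spq p q a ∩ {x | ∑ i : Fin (p+1), av i * x (idx1 p q i) = 0}) := by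
  set M := (Spq p q a ∩ {x | ∑ i : Fin (p+1), av i * x (idx1 p q i) = 0}) with hM
  obtain ⟨T, P, hPT, hvT, hT, hTP⟩ := exists_TP p (WithLp.toLp 2 av) (by simpa using hav)
  have ha2 : 1 < a ^ 2 := by nlinarith
  have hin : ∀ x, (∑ i : Fin (p+1), av i * x (idx1 p q i) = 0) ↔
      inner ℝ (WithLp.toLp 2 av) (X1 p q x) = 0 := by
    intro x
    simp [PiLp.inner_apply, X1, mul_comm]
  have hmem : ∀ x, x ∈ M ↔ ‖Y1 p q a x‖ = 1 ∧ inner ℝ (WithLp.toLp 2 av) (X1 p q x) = 0 := by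
    intro x
    rw [hM, Set.mem_inter_iff, mem_Spq, Set.mem_ofPred_eq, hin]
  have hPn : ∀ x ∈ M, ‖P (X1 p q x)‖ = ‖X1 p q x‖ := by
    intro x hx
    rw [← hT, hTP _ ((hmem x).1 hx).2]
  have hXpos : ∀ x ∈ M, 0 < ‖X1 p q x‖ := by
    intro x hx
    have h1 := abs_coord_le _ ((hmem x).1 hx).1 0
    rw [Y1_zero] at h1
    have : 0 < ‖X1 p q x‖ ^ 2 := by linarith
    refine lt_of_le_of_ne (norm_nonneg _) fun h0 => ?_
    rw [← h0] at this
    norm_num at this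
  have hsq : ∀ (s : EuclideanSpace ℝ (Fin p)) (t : EuclideanSpace ℝ (Fin (q+1))),
      ‖s‖ = 1 → ‖t‖ = 1 → ‖T (√(t 0 + a ^ 2) • s)‖ = √(t 0 + a ^ 2) := by
    intro s t hs ht
    rw [hT, norm_smul, hs, mul_one, Real.norm_eq_abs, abs_of_nonneg (Real.sqrt_nonneg _)]
  have hsq2 : ∀ (t : EuclideanSpace ℝ (Fin (q+1))), ‖t‖ = 1 → 0 < t 0 + a ^ 2 := by
    intro t ht
    have := abs_coord_le t ht 0
    linarith
  have hsq3 : ∀ (s : EuclideanSpace ℝ (Fin p)) (t : EuclideanSpace ℝ (Fin (q+1))),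
      ‖s‖ = 1 → ‖t‖ = 1 → ‖T (√(t 0 + a ^ 2) • s)‖ ^ 2 = t 0 + a ^ 2 := by
    intro s t hs ht
    rw [hsq s t hs ht, Real.sq_sqrt (hsq2 t ht).le]
  let e : M ≃ₜ (↥(Metric.sphere (0 : EuclideanSpace ℝ (Fin p)) 1) ×
       ↥(Metric.sphere (0 : EuclideanSpace ℝ (Fin (q+1))) 1)) :=
    { toFun := fun x => (⟨‖X1 p q x.1‖⁻¹ • P (X1 p q x.1), by
          rw [mem_sphere_zero_iff_norm, norm_smul, hPn _ x.2, norm_inv, norm_norm]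
          exact inv_mul_cancel₀ (hXpos _ x.2).ne'⟩,
        ⟨Y1 p q a x.1, by
          rw [mem_sphere_zero_iff_norm]; exact ((hmem _).1 x.2).1⟩)
      invFun := fun z => ⟨Z1 p q (T (√(z.2.1 0 + a ^ 2) • z.1.1)) z.2.1, by
          have h1 := mem_sphere_zero_iff_norm.1 z.1.2
          have h2 := mem_sphere_zero_iff_norm.1 z.2.2
          rw [hmem, X1_Z1, Y1_Z1 _ _ _ _ _ (hsq3 _ _ h1 h2)]
          exact ⟨h2, hvT _⟩⟩
      left_inv := by
        rintro ⟨x, hx⟩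
        apply Subtype.ext
        have h : T (√(Y1 p q a x 0 + a ^ 2) • ‖X1 p q x‖⁻¹ • P (X1 p q x)) = X1 p q x := by
          rw [Y1_zero, sub_add_cancel, Real.sqrt_sq (norm_nonneg _), smul_smul,
            mul_inv_cancel₀ (hXpos _ hx).ne', one_smul, hTP _ ((hmem x).1 hx).2]
        change Z1 p q (T (√(Y1 p q a x 0 + a ^ 2) • ‖X1 p q x‖⁻¹ • P (X1 p q x)))
          (Y1 p q a x) = x
        rw [h]
        apply ext_idx
        · intro i; rw [Z1_idx1]; rfl
        · intro j; rw [Z1_idx2]; simp [Y1]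
      right_inv := by
        rintro ⟨⟨s, hs⟩, ⟨t, ht⟩⟩
        have h1 := mem_sphere_zero_iff_norm.1 hs
        have h2 := mem_sphere_zero_iff_norm.1 ht
        refine Prod.ext (Subtype.ext ?_) (Subtype.ext ?_)
        · change ‖X1 p q (Z1 p q (T (√(t 0 + a ^ 2) • s)) t)‖⁻¹ •
            P (X1 p q (Z1 p q (T (√(t 0 + a ^ 2) • s)) t)) = s
          rw [X1_Z1, hsq s t h1 h2, hPT, smul_smul, inv_mul_cancel₀, one_smul]
          exact (Real.sqrt_pos.2 (hsq2 t h2)).ne'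
        · exact Y1_Z1 _ _ _ _ _ (hsq3 _ _ h1 h2)
      continuous_toFun := by
        have hc : Continuous fun x : M => X1 p q x.1 := (cont_X1 p q).comp continuous_subtype_val
        refine Continuous.prodMk ?_ ?_
        · refine Continuous.subtype_mk ?_ _
          exact (hc.norm.inv₀ fun x => (hXpos _ x.2).ne').smul (P.continuous.comp hc)
        · exact Continuous.subtype_mk ((cont_Y1 p q a).comp continuous_subtype_val) _
      continuous_invFun := by
        refine Continuous.subtype_mk ?_ _
        refine (cont_Z1 p q).comp (Continuous.prodMk ?_ ?_)
        · refine T.continuous.comp ?_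
          fun_prop
        · fun_prop }
  refine ⟨⟨e⟩, ?_⟩
  have hs : ∀ n : ℕ, 2 ≤ n →
      PathConnectedSpace ↥(Metric.sphere (0 : EuclideanSpace ℝ (Fin n)) 1) := by
    intro n hn
    rw [← isPathConnected_iff_pathConnectedSpace]
    refine isPathConnected_sphere ?_ 0 zero_le_one
    rw [← Module.finrank_eq_rank]
    simp
    omega
  have := hs p hp
  have := hs (q+1) (by omega)
  rw [isPathConnected_iff_pathConnectedSpace]
  exact e.symm.surjective.pathConnectedSpace e.symm.continuous
end

section
/- Let p, q ≥ 2 be integers, a > 1, let (b_{p+2},…,b_n) ∈ ℝ^q satisfy b_{p+2}² + ⋯ + b_n² = 1, and let c ∈ (0,1). Then the parallel S_{p,q} ∩ {x ∈ ℝⁿ : b_{p+2}x_{p+2} + ⋯ + b_nx_n = c} is nonempty and path connected. -/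
/-- Parametrization of the parallel by a product of two spheres. -/
noncomputable def parF (p q : ℕ) (a c r : ℝ) (b : Fin q → ℝ)
    (z : EuclideanSpace ℝ (Fin (p+1)) × EuclideanSpace ℝ (Fin q)) : Fin (p+q+1) → ℝ :=
  fun k => if h : (k:ℕ) < p+1 then √(a^2 + r * ∑ j, b j * z.2 j) * z.1 ⟨k, h⟩
    else c * b ⟨k - (p+1), by omega⟩
      + r * (z.2 ⟨k - (p+1), by omega⟩ - (∑ j, b j * z.2 j) * b ⟨k - (p+1), by omega⟩)

lemma parF_idx1 (p q : ℕ) (a c r : ℝ) (b : Fin q → ℝ)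
    (z : EuclideanSpace ℝ (Fin (p+1)) × EuclideanSpace ℝ (Fin q)) (i : Fin (p+1)) :
    parF p q a c r b z (idx1 p q i) = √(a^2 + r * ∑ j, b j * z.2 j) * z.1 i := by
  have h : ((idx1 p q i : Fin (p+q+1)) : ℕ) < p+1 := i.2
  unfold parF
  rw [dif_pos h]
  rfl

lemma parF_idx2 (p q : ℕ) (a c r : ℝ) (b : Fin q → ℝ)
    (z : EuclideanSpace ℝ (Fin (p+1)) × EuclideanSpace ℝ (Fin q)) (i : Fin q) :
    parF p q a c r b z (idx2 p q i)
      = c * b i + r * (z.2 i - (∑ j, b j * z.2 j) * b i) := by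
  have h : ¬ ((idx2 p q i : Fin (p+q+1)) : ℕ) < p+1 := by simp only [idx2]; omega
  have e : ∀ hh, (⟨((idx2 p q i : Fin (p+q+1)) : ℕ) - (p+1), hh⟩ : Fin q) = i := by
    intro hh; ext; simp [idx2]
  unfold parF
  rw [dif_neg h]
  simp only [e]

lemma parF_cont (p q : ℕ) (a c r : ℝ) (b : Fin q → ℝ) : Continuous (parF p q a c r b) := by
  refine continuous_pi fun k => ?_
  unfold parF
  by_cases h : (k:ℕ) < p+1
  · simp only [h, dite_true]; fun_prop
  · simp only [h, dite_false]; fun_prop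

lemma idx_ext (p q : ℕ) {x y : Fin (p+q+1) → ℝ} (h1 : ∀ i, x (idx1 p q i) = y (idx1 p q i))
    (h2 : ∀ i, x (idx2 p q i) = y (idx2 p q i)) : x = y := by
  funext k
  by_cases h : (k:ℕ) < p+1
  · exact h1 ⟨k, h⟩
  · have := h2 ⟨k - (p+1), by omega⟩
    have e : idx2 p q ⟨k - (p+1), by omega⟩ = k := by
      ext; simp [idx2]; omega
    rwa [e] at this

lemma mem_sph {m : ℕ} (u : EuclideanSpace ℝ (Fin m)) :
    u ∈ Metric.sphere (0 : EuclideanSpace ℝ (Fin m)) 1 ↔ ∑ i, u i ^ 2 = 1 := by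
  rw [mem_sphere_zero_iff_norm, ← EuclideanSpace.real_norm_sq_eq]
  constructor
  · intro h; rw [h]; norm_num
  · intro h; nlinarith [norm_nonneg u]

lemma sph_pc {m : ℕ} (hm : 2 ≤ m) :
    IsPathConnected (Metric.sphere (0 : EuclideanSpace ℝ (Fin m)) 1) := by
  apply isPathConnected_sphere _ _ zero_le_one
  rw [← Module.finrank_eq_rank]
  simp only [finrank_euclideanSpace_fin]
  exact_mod_cast hm

/-- Expansion of a quadratic sum. -/
lemma sum_comb {q : ℕ} (b y : Fin q → ℝ) (hb : ∑ j, b j ^ 2 = 1) (l m : ℝ) :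
    ∑ j, (l * y j + m * b j) ^ 2 = l^2 * ∑ j, y j ^ 2 + 2*l*m * ∑ j, b j * y j + m^2 := by
  have : ∀ j, (l * y j + m * b j) ^ 2 = l^2 * y j ^ 2 + 2*l*m * (b j * y j) + m^2 * b j ^ 2 := by
    intro j; ring
  simp only [this, Finset.sum_add_distrib, ← Finset.mul_sum, hb, mul_one]

lemma sum_lin {q : ℕ} (b y : Fin q → ℝ) (hb : ∑ j, b j ^ 2 = 1) (l m : ℝ) :
    ∑ j, b j * (l * y j + m * b j) = l * ∑ j, b j * y j + m := by
  have : ∀ j, b j * (l * y j + m * b j) = l * (b j * y j) + m * b j ^ 2 := by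
    intro j; ring
  simp only [this, Finset.sum_add_distrib, ← Finset.mul_sum, hb, mul_one]

lemma par_eq (p q : ℕ) (a : ℝ) (ha : 1 < a)
    (b : Fin q → ℝ) (hb : ∑ j : Fin q, b j ^ 2 = 1) (c : ℝ) (hc : c ∈ Set.Ioo (0:ℝ) 1) :
    parF p q a c (√(1 - c^2)) b '' (Metric.sphere 0 1 ×ˢ Metric.sphere 0 1)
      = Spq p q a ∩ {x | ∑ j : Fin q, b j * x (idx2 p q j) = c} := by
  obtain ⟨hc0, hc1⟩ := hc
  have hr2 : √(1 - c^2) ^ 2 = 1 - c^2 := Real.sq_sqrt (by nlinarith)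
  have hr0 : 0 < √(1 - c^2) := Real.sqrt_pos.2 (by nlinarith)
  generalize √(1 - c^2) = r at *
  have hr1 : r < 1 := by nlinarith
  ext x
  constructor
  · rintro ⟨⟨u, v⟩, ⟨hu, hv⟩, rfl⟩
    rw [mem_sph] at hu hv
    simp only at hu hv
    have e2 : ∀ i, parF p q a c r b (u, v) (idx2 p q i)
        = r * v i + (c - r * ∑ j, b j * v j) * b i := by
      intro i; rw [parF_idx2]; ring
    have key := sum_comb b (fun j => v j) hb 1 (-∑ j, b j * v j)
    have keyb : 0 ≤ ∑ j, (1 * v j + (-∑ j, b j * v j) * b j) ^ 2 :=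
      Finset.sum_nonneg fun _ _ => sq_nonneg _
    simp only [hv] at key
    have s1 := sum_comb b (fun j => v j) hb r (c - r * ∑ j, b j * v j)
    have s2 := sum_lin b (fun j => v j) hb r (c - r * ∑ j, b j * v j)
    simp only [hv] at s1
    rw [key] at keyb
    simp only [Spq, Set.mem_inter_iff, Set.mem_ofPred_eq, e2, parF_idx1, mul_pow _ _ 2,
      ← Finset.mul_sum, hu]
    rw [s1, s2]
    generalize ∑ j, b j * v j = t at *
    have ht : -1 ≤ t := by nlinarith
    rw [Real.sq_sqrt (by nlinarith)]
    constructor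
    · ring_nf; nlinarith
    · ring
  · rintro ⟨h1, h2⟩
    simp only [Spq, Set.mem_ofPred_eq] at h1 h2
    have key := sum_comb b (fun j => x (idx2 p q j)) hb 1 (-c)
    have hN : 0 ≤ ∑ j, x (idx2 p q j) ^ 2 := Finset.sum_nonneg fun _ _ => sq_nonneg _
    simp only [h2] at key
    set R := ∑ i, x (idx1 p q i) ^ 2 with hR
    have hab := abs_le_one_iff_mul_self_le_one.2 (by nlinarith : (R - a^2) * (R - a^2) ≤ 1)
    have hRpos : 0 < R := by nlinarith [(abs_le.1 hab).1]
    have hs : √R ≠ 0 := (Real.sqrt_pos.2 hRpos).ne'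
    have hs2 : √R ^ 2 = R := Real.sq_sqrt hRpos.le
    have s1 := sum_comb b (fun j => x (idx2 p q j)) hb (1/r) ((R - a^2)/r - c/r)
    have s2 := sum_lin b (fun j => x (idx2 p q j)) hb (1/r) ((R - a^2)/r - c/r)
    simp only [h2] at s1 s2
    refine ⟨(WithLp.toLp 2 fun i => x (idx1 p q i) / √R,
      WithLp.toLp 2 fun j => (1/r) * x (idx2 p q j) + ((R - a^2)/r - c/r) * b j), ⟨?_, ?_⟩, ?_⟩
    · rw [mem_sph]
      simp only [div_pow, ← Finset.sum_div, hs2, ← hR]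
      exact div_self hRpos.ne'
    · rw [mem_sph]
      simp only [s1]
      have : ∑ j, x (idx2 p q j) ^ 2 = 1 - (R - a^2)^2 := by linarith
      rw [this]
      field_simp
      rw [hr2]; ring
    · apply idx_ext
      · intro i
        rw [parF_idx1]
        simp only [s2]
        have : a ^ 2 + r * (1 / r * c + ((R - a ^ 2) / r - c / r)) = R := by
          field_simp; ring
        rw [this]
        field_simp
      · intro i
        rw [parF_idx2]
        simp only [s2]
        field_simp
        ring

/-- For `p, q ≥ 2`, a unit vector `(b_{p+2},…,b_n) ∈ ℝ^q` and `c ∈ (0,1)`, the parallel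
`S_{p,q} ∩ {b_{p+2}x_{p+2} + ⋯ + b_nx_n = c}` is nonempty and path connected. -/
theorem stmt6 (p q : ℕ) (hp : 2 ≤ p) (hq : 2 ≤ q) (a : ℝ) (ha : 1 < a)
    (b : Fin q → ℝ) (hb : ∑ j : Fin q, b j ^ 2 = 1) (c : ℝ) (hc : c ∈ Set.Ioo (0:ℝ) 1) :
    (Spq p q a ∩ {x | ∑ j : Fin q, b j * x (idx2 p q j) = c}).Nonempty ∧
    IsPathConnected (Spq p q a ∩ {x | ∑ j : Fin q, b j * x (idx2 p q j) = c}) := by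
  rw [← par_eq p q a ha b hb c hc]
  have h : IsPathConnected (parF p q a c (√(1 - c^2)) b ''
      (Metric.sphere 0 1 ×ˢ Metric.sphere 0 1)) :=
    ((sph_pc (by omega)).prod (sph_pc hq)).image (parF_cont p q a c _ b)
  exact ⟨h.nonempty, h⟩
end

section
/- Let X = Σ_{i=1}^n Rᵢ ∂/∂xᵢ be a polynomial vector field of degree at most one defined on S_{p,q}, with Rᵢ = Σ_{j=1}^n c_{ij} xⱼ + c_{i0}. Suppose the meridian {a₁x₁ + ⋯ + a_{p+1}x_{p+1} = 0}, with (a₁,…,a_{p+1}) ≠ 0, is invariant for X, i.e. Σ_{i=1}^{p+1} aᵢRᵢ = K'·(Σ_{i=1}^{p+1} aᵢxᵢ) for some polynomial K'. Then Σ_{i=1}^{p+1} aᵢ c_{ij} = 0 for every j ∈ {1,…,p+1}; that is, (a₁,…,a_{p+1}) is an eigenvector of the transpose of A = (c_{ij})_{1≤i,j≤p+1} with eigenvalue 0 (A being skew-symmetric, 0 is its only possible real eigenvalue). -/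
open MvPolynomial

/-- Extension of a vector by zero in the last `q` coordinates. -/
noncomputable def extPt (p q : ℕ) (u : Fin (p+1) → ℝ) : Fin (p+q+1) → ℝ :=
  fun k => if h : (k : ℕ) < p + 1 then u ⟨k, h⟩ else 0

theorem extPt_idx1 (p q : ℕ) (u : Fin (p+1) → ℝ) (i) : extPt p q u (idx1 p q i) = u i := by
  simp [extPt, idx1, i.isLt]

theorem extPt_idx2 (p q : ℕ) (u : Fin (p+1) → ℝ) (j) : extPt p q u (idx2 p q j) = 0 := by
  have h : ¬ p + 1 + (j : ℕ) < p + 1 := by omega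
  exact dif_neg h

theorem sum_extPt (p q : ℕ) (u : Fin (p+1) → ℝ) (f : Fin (p+q+1) → ℝ) :
    ∑ k, f k * extPt p q u k = ∑ i, f (idx1 p q i) * u i := by
  have hinj : Function.Injective (idx1 p q) := by
    intro i j h
    simpa [idx1] using h
  have h1 : ∑ i, f (idx1 p q i) * u i =
      ∑ k ∈ Finset.univ.map ⟨idx1 p q, hinj⟩, f k * extPt p q u k := by
    simp [Finset.sum_map, extPt_idx1]
  rw [h1]
  symm
  apply Finset.sum_subset (Finset.subset_univ _)
  intro k _ hk
  have : ¬ (k : ℕ) < p + 1 := by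
    intro h
    apply hk
    simp only [Finset.mem_map, Finset.mem_univ, true_and, Function.Embedding.coeFn_mk]
    exact ⟨⟨k, h⟩, by simp [idx1]⟩
  simp [extPt, this]

theorem field_hpq (p q : ℕ) (a : ℝ) (R : Fin (p+q+1) → MvPolynomial (Fin (p+q+1)) ℝ) :
    (∑ i, R i * pderiv i (hpq p q a)) =
      2 * ((∑ i : Fin (p+1), X (idx1 p q i) ^ 2) - C (a^2)) *
        (∑ i : Fin (p+1), 2 * X (idx1 p q i) * R (idx1 p q i))
      + ∑ j : Fin q, 2 * X (idx2 p q j) * R (idx2 p q j) := by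
  have hD : ∀ f, (∑ i, R i * pderiv i f) = mkDerivation ℝ R f := by
    intro f
    have : (∑ i, R i • pderiv i : Derivation ℝ _ (MvPolynomial (Fin (p+q+1)) ℝ))
        = mkDerivation ℝ R := by
      apply MvPolynomial.derivation_ext
      intro i
      rw [← Derivation.coeFnAddMonoidHom_apply, map_sum]
      simp [pderiv_X, Pi.single_apply, mkDerivation_X]
    rw [← this, ← Derivation.coeFnAddMonoidHom_apply, map_sum]
    simp
  have hC : mkDerivation ℝ R (C (a^2)) = 0 := derivation_C _ _
  have hX : ∀ k, mkDerivation ℝ R (X k ^ 2) = 2 * X k * R k := by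
    intro k
    rw [Derivation.leibniz_pow, mkDerivation_X]
    simp
    ring
  rw [hD, hpq]
  simp only [map_sub, map_add, map_sum, Derivation.leibniz_pow _ (_ - _), hC, hX, Derivation.map_one_eq_zero]
  simp
  ring

/-- If the meridian `{a₁x₁ + ⋯ + a_{p+1}x_{p+1} = 0}` is invariant for a degree-one
vector field `X = Σ Rᵢ ∂/∂xᵢ` defined on `S_{p,q}`, with `Rᵢ = Σⱼ c_{ij}xⱼ + c_{i0}`,
then `Σ_{i=1}^{p+1} aᵢ c_{ij} = 0` for every `j ∈ {1,…,p+1}`: the vector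
`(a₁,…,a_{p+1})` is an eigenvector of the transpose of `A = (c_{ij})_{1≤i,j≤p+1}`
with eigenvalue `0`. -/
theorem stmt9 (p q : ℕ) (hp : 1 ≤ p) (hq : 1 ≤ q) (a : ℝ) (ha : 1 < a)
    (R : Fin (p+q+1) → MvPolynomial (Fin (p+q+1)) ℝ)
    (c : Fin (p+q+1) → Fin (p+q+1) → ℝ) (c0 : Fin (p+q+1) → ℝ)
    (hR : ∀ i, R i = (∑ j, C (c i j) * X j) + C (c0 i))
    (K : MvPolynomial (Fin (p+q+1)) ℝ)
    (hinv : (∑ i, R i * pderiv i (hpq p q a)) = K * hpq p q a)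
    (av : Fin (p+1) → ℝ) (hav : av ≠ 0)
    (K' : MvPolynomial (Fin (p+q+1)) ℝ)
    (hmer : (∑ i : Fin (p+1), C (av i) * R (idx1 p q i))
      = K' * (∑ i : Fin (p+1), C (av i) * X (idx1 p q i))) :
    ∀ j : Fin (p+1), ∑ i : Fin (p+1), av i * c (idx1 p q i) (idx1 p q j) = 0 := by
  
  set b : Fin (p+1) → ℝ := fun j => ∑ i, av i * c (idx1 p q i) (idx1 p q j) with hb
  have hRe : ∀ (u : Fin (p+1) → ℝ) k, eval (extPt p q u) (R k)
      = ∑ j, c k (idx1 p q j) * u j + c0 k := by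
    intro u k
    rw [hR]
    simp [sum_extPt]
  have hL : ∀ u : Fin (p+1) → ℝ, ∑ i, av i * eval (extPt p q u) (R (idx1 p q i))
      = ∑ j, b j * u j + ∑ i, av i * c0 (idx1 p q i) := by
    intro u
    simp only [hRe, hb, mul_add, Finset.sum_add_distrib, Finset.mul_sum, Finset.sum_mul]
    rw [Finset.sum_comm]
    simp only [mul_assoc]
  have hM : ∀ u : Fin (p+1) → ℝ, ∑ i, av i * eval (extPt p q u) (R (idx1 p q i))
      = eval (extPt p q u) K' * ∑ i, av i * u i := by
    intro u
    have := congrArg (eval (extPt p q u)) hmer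
    simpa [extPt_idx1] using this
  have hβ : ∑ i, av i * c0 (idx1 p q i) = 0 := by
    have h1 := hL 0
    rw [hM] at h1
    simpa using h1.symm
  have hN : 0 < ∑ i, av i * av i := by
    obtain ⟨i, hi⟩ := Function.ne_iff.mp hav
    exact Finset.sum_pos' (fun i _ => mul_self_nonneg _)
      ⟨i, Finset.mem_univ _, mul_self_pos.mpr hi⟩
  set N := ∑ i, av i * av i with hNdef
  have hkey : ∑ j, b j * av j = 0 := by
    set t := Real.sqrt ((a^2+1)/N) with ht
    have htp : 0 < t := Real.sqrt_pos.mpr (by positivity)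
    have ht2 : t^2 * N = a^2+1 := by
      rw [ht, Real.sq_sqrt (by positivity)]
      field_simp
    have hS : ∑ i, (t * av i)^2 = a^2+1 := by
      rw [← ht2, hNdef, Finset.mul_sum]
      exact Finset.sum_congr rfl fun i _ => by ring
    have h1 := congrArg (eval (extPt p q (fun i => t * av i))) hinv
    rw [field_hpq] at h1
    have h2 : eval (extPt p q (fun i => t * av i)) (hpq p q a) = 0 := by
      simp [hpq, extPt_idx1, extPt_idx2, hS]
    rw [map_mul, h2, mul_zero] at h1
    simp only [map_add, map_sub, map_mul, map_sum, map_pow, eval_X, eval_C, extPt_idx1,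
      extPt_idx2, hS, mul_zero, zero_mul, Finset.sum_const_zero, add_zero, map_ofNat] at h1
    have h3 := hL (fun i => t * av i)
    rw [hβ] at h3
    have h4 : ∑ i, 2 * (t * av i) * eval (extPt p q (fun i => t * av i)) (R (idx1 p q i))
        = 2 * t * (t * ∑ j, b j * av j) := by
      have h5 : ∑ j, b j * (t * av j) = t * ∑ j, b j * av j := by
        rw [Finset.mul_sum]
        exact Finset.sum_congr rfl fun i _ => by ring
      rw [← h5, ← add_zero (∑ j, b j * (t * av j)), ← h3, Finset.mul_sum]
      exact Finset.sum_congr rfl fun i _ => by ring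
    rw [h4] at h1
    have h6 : (4 * t * t) * ∑ j, b j * av j = 0 := by linear_combination h1
    exact (mul_eq_zero.mp h6).resolve_left (by positivity)
  intro j
  change b j = 0
  have h1 := hL (fun i => (if i = j then 1 else 0) - av j / N * av i)
  rw [hM, hβ] at h1
  have h2 : ∀ f : Fin (p+1) → ℝ, ∑ i, f i * ((if i = j then 1 else 0) - av j / N * av i)
      = f j - av j / N * ∑ i, f i * av i := by
    intro f
    simp only [mul_sub, Finset.sum_sub_distrib, Finset.mul_sum]
    congr 1
    · simp
    · exact Finset.sum_congr rfl fun i _ => by ring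
  rw [h2, h2, hkey, ← hNdef, div_mul_cancel₀ _ hN.ne'] at h1
  linarith
end

section
/- Let q ≥ 1 be an integer, n = q + 2, a > 1, and let (a₁,a₂) ∈ ℝ² be nonzero. Then the intersection {x ∈ ℝⁿ : a₁x₁ + a₂x₂ = 0} ∩ S_{1,q} has exactly two connected components. -/
/-- The hypersurface `S_{1,q} ⊂ ℝ^{q+2}` defined by
`(x₁² + x₂² − a²)² + x₃² + ⋯ + x_n² = 1`, which is homeomorphic to `S¹ × S^q`. -/
def S1q (q : ℕ) (a : ℝ) : Set (Fin (q+2) → ℝ) :=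
  {x | (x 0 ^ 2 + x 1 ^ 2 - a^2)^2
        + (∑ j : Fin q, x (⟨2+(j:ℕ), by omega⟩ : Fin (q+2)) ^ 2) = 1}

theorem aux_core (q : ℕ) (hq : 1 ≤ q) (a : ℝ) (ha : 1 < a) (u v : ℝ) (huv : u ^ 2 + v ^ 2 = 1) :
    Nat.card (ConnectedComponents
      ↥({x : Fin (q+2) → ℝ | v * x 0 - u * x 1 = 0} ∩ S1q q a)) = 2 := by
  set X : Set (Fin (q+2) → ℝ) := {x : Fin (q+2) → ℝ | v * x 0 - u * x 1 = 0} ∩ S1q q a with hX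
  -- the coordinate along the line
  let t : X → ℝ := fun x => u * x.1 0 + v * x.1 1
  have htc : Continuous t := by
    have h0 : Continuous fun x : X => x.1 0 := (continuous_apply 0).comp continuous_subtype_val
    have h1 : Continuous fun x : X => x.1 1 := (continuous_apply 1).comp continuous_subtype_val
    exact (continuous_const.mul h0).add (continuous_const.mul h1)
  have hx0 : ∀ x : X, x.1 0 = t x * u := by
    intro x
    have h : v * x.1 0 - u * x.1 1 = 0 := x.2.1
    show x.1 0 = (u * x.1 0 + v * x.1 1) * u
    linear_combination (-x.1 0) * huv + v * h
  have hx1 : ∀ x : X, x.1 1 = t x * v := by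
    intro x
    have h : v * x.1 0 - u * x.1 1 = 0 := x.2.1
    show x.1 1 = (u * x.1 0 + v * x.1 1) * v
    linear_combination (-x.1 1) * huv - u * h
  have hxS : ∀ x : X, (t x ^ 2 - a ^ 2) ^ 2
      + (∑ j : Fin q, x.1 (⟨2+(j:ℕ), by omega⟩ : Fin (q+2)) ^ 2) = 1 := by
    intro x
    have h : (x.1 0 ^ 2 + x.1 1 ^ 2 - a^2)^2
        + (∑ j : Fin q, x.1 (⟨2+(j:ℕ), by omega⟩ : Fin (q+2)) ^ 2) = 1 := x.2.2
    have e : x.1 0 ^ 2 + x.1 1 ^ 2 = t x ^ 2 := by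
      rw [hx0, hx1]; linear_combination (t x ^ 2) * huv
    rwa [e] at h
  have ht0 : ∀ x : X, t x ≠ 0 := by
    intro x h0
    have h := hxS x
    have hs : 0 ≤ ∑ j : Fin q, x.1 (⟨2+(j:ℕ), by omega⟩ : Fin (q+2)) ^ 2 :=
      Finset.sum_nonneg fun _ _ => sq_nonneg _
    rw [h0] at h
    have : 1 < a ^ 2 := by nlinarith
    nlinarith
  let Sph := Metric.sphere (0 : EuclideanSpace ℝ (Fin (q+1))) 1
  have hSph : ∀ y : Sph, y.1 0 ^ 2 + ∑ j : Fin q, y.1 j.succ ^ 2 = 1 := by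
    intro y
    have h := y.2
    rw [mem_sphere_zero_iff_norm] at h
    have h2 := EuclideanSpace.real_norm_sq_eq y.1
    rw [h, Fin.sum_univ_succ] at h2
    linarith
  have hpos : ∀ y : Sph, 0 < a ^ 2 + y.1 0 := by
    intro y
    have h := hSph y
    have hs : 0 ≤ ∑ j : Fin q, y.1 j.succ ^ 2 := Finset.sum_nonneg fun _ _ => sq_nonneg _
    have h1 : 1 < a ^ 2 := by nlinarith
    have h2 : -1 ≤ y.1 0 := (abs_le_one_iff_mul_self_le_one.2 (by nlinarith) |> abs_le.1).1
    linarith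
  let g : ℝ → Sph → (Fin (q+2) → ℝ) := fun ε y =>
    Fin.cons (ε * √(a ^ 2 + y.1 0) * u) (Fin.cons (ε * √(a ^ 2 + y.1 0) * v) fun j => y.1 j.succ)
  have g0 : ∀ ε y, g ε y 0 = ε * √(a ^ 2 + y.1 0) * u := fun ε y => rfl
  have g1 : ∀ ε y, g ε y 1 = ε * √(a ^ 2 + y.1 0) * v := fun ε y => rfl
  have g2 : ∀ ε y (j : Fin q), g ε y ⟨2 + (j:ℕ), by omega⟩ = y.1 j.succ := by
    intro ε y j
    have : (⟨2 + (j:ℕ), by omega⟩ : Fin (q+2)) = j.succ.succ := by ext; simp; omega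
    rw [this]; rfl
  have hgX : ∀ ε : ℝ, ε ^ 2 = 1 → ∀ y, g ε y ∈ X := by
    intro ε hε y
    refine ⟨?_, ?_⟩
    · show v * g ε y 0 - u * g ε y 1 = 0
      rw [g0, g1]; ring
    · show (g ε y 0 ^ 2 + g ε y 1 ^ 2 - a^2)^2
        + (∑ j : Fin q, g ε y (⟨2+(j:ℕ), by omega⟩ : Fin (q+2)) ^ 2) = 1
      simp only [g2]
      have e : g ε y 0 ^ 2 + g ε y 1 ^ 2 - a^2 = y.1 0 := by
        rw [g0, g1]
        have hs := Real.sq_sqrt (hpos y).le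
        linear_combination (ε ^ 2 * √(a ^ 2 + y.1 0) ^ 2) * huv + √(a ^ 2 + y.1 0) ^ 2 * hε + hs
      rw [e]; exact hSph y
  have hgc : ∀ ε, Continuous (g ε) := by
    intro ε
    have hy : ∀ i, Continuous fun y : Sph => y.1 i := fun i => by fun_prop
    have hs : Continuous fun y : Sph => √(a ^ 2 + y.1 0) :=
      (continuous_const.add (hy 0)).sqrt
    refine continuous_pi fun i => ?_
    refine Fin.cases ?_ (fun i => Fin.cases ?_ (fun i => ?_) i) i
    · exact (continuous_const.mul hs).mul continuous_const
    · exact (continuous_const.mul hs).mul continuous_const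
    · exact hy i.succ
  have hconn : IsPreconnected (Set.univ : Set Sph) := by
    have h := isPreconnected_sphere (E := EuclideanSpace ℝ (Fin (q+1)))
      (by rw [← Module.finrank_eq_rank]; simp; omega) 0 1
    exact (isPreconnected_iff_preconnectedSpace.1 h).isPreconnected_univ
  -- the continuous sign
  let b : X → Bool := fun x => decide (0 < t x)
  have hbc : Continuous b := by
    rw [continuous_bool_rng true]
    have e : b ⁻¹' {true} = {x | 0 < t x} := by ext x; simp [b]
    rw [e]
    refine ⟨?_, isOpen_lt continuous_const htc⟩
    have e2 : {x | 0 < t x} = {x | 0 ≤ t x} := by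
      ext x
      show 0 < t x ↔ 0 ≤ t x
      exact ⟨fun h => le_of_lt h, fun h => lt_of_le_of_ne h (ht0 x).symm⟩
    rw [e2]
    exact isClosed_le continuous_const htc
  -- every point lies in the image of the appropriate parametrization
  have hsurj : ∀ ε : ℝ, ε ^ 2 = 1 → ∀ x : X, 0 < ε * t x → ∃ y, g ε y = x.1 := by
    intro ε hε x hx
    let y : EuclideanSpace ℝ (Fin (q+1)) := WithLp.toLp 2
      (Fin.cons (t x ^ 2 - a ^ 2) fun j : Fin q => x.1 (⟨2+(j:ℕ), by omega⟩ : Fin (q+2)))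
    have y0 : y 0 = t x ^ 2 - a ^ 2 := rfl
    have ys : ∀ j : Fin q, y j.succ = x.1 (⟨2+(j:ℕ), by omega⟩ : Fin (q+2)) := fun j => rfl
    have hy : y ∈ Sph := by
      rw [mem_sphere_zero_iff_norm]
      have h2 := EuclideanSpace.real_norm_sq_eq y
      rw [Fin.sum_univ_succ, y0] at h2
      simp only [ys] at h2
      rw [hxS x] at h2
      have := norm_nonneg y
      nlinarith
    refine ⟨⟨y, hy⟩, ?_⟩
    have hsq : ε * √(a ^ 2 + y 0) = t x := by
      have : a ^ 2 + y 0 = (ε * t x) ^ 2 := by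
        rw [y0]; linear_combination (- t x ^ 2) * hε
      rw [this, Real.sqrt_sq hx.le]
      linear_combination t x * hε
    funext i
    refine Fin.cases ?_ (fun i => Fin.cases ?_ (fun i => ?_) i) i
    · rw [g0, hx0]; show ε * √(a ^ 2 + y 0) * u = _; rw [hsq]
    · show g ε ⟨y, hy⟩ 1 = x.1 1
      rw [g1, hx1]; show ε * √(a ^ 2 + y 0) * v = _; rw [hsq]
    · have : i.succ.succ = (⟨2 + (i:ℕ), by omega⟩ : Fin (q+2)) := by ext; simp; omega
      rw [this, g2]; exact ys i
  have hjoin : ∀ ε : ℝ, ε ^ 2 = 1 → ∀ x x' : X, 0 < ε * t x → 0 < ε * t x' →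
      (x : ConnectedComponents X) = x' := by
    intro ε hε x x' hx hx'
    let f : Sph → X := fun y => ⟨g ε y, hgX ε hε y⟩
    have hf : Continuous f := (hgc ε).subtype_mk _
    have hp := hconn.image f hf.continuousOn
    obtain ⟨y, hy⟩ := hsurj ε hε x hx
    obtain ⟨y', hy'⟩ := hsurj ε hε x' hx'
    rw [ConnectedComponents.coe_eq_coe']
    exact hp.subset_connectedComponent ⟨y', trivial, Subtype.ext hy'⟩ ⟨y, trivial, Subtype.ext hy⟩
  have y0 : Sph := ⟨EuclideanSpace.single 0 1, by simp [Sph]⟩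
  have hne : ∀ ε : ℝ, ε ^ 2 = 1 → ∃ x : X, 0 < ε * t x := by
    intro ε hε
    refine ⟨⟨g ε y0, hgX ε hε y0⟩, ?_⟩
    have hs := Real.sqrt_pos.2 (hpos y0)
    have : ε * t ⟨g ε y0, hgX ε hε y0⟩ = √(a ^ 2 + y0.1 0) := by
      show ε * (u * g ε y0 0 + v * g ε y0 1) = _
      rw [g0, g1]
      linear_combination (ε ^ 2 * √(a ^ 2 + y0.1 0)) * huv + √(a ^ 2 + y0.1 0) * hε
    rw [this]; exact hs
  have hbij : Function.Bijective hbc.connectedComponentsLift := by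
    constructor
    · intro c c' h
      obtain ⟨x, rfl⟩ := ConnectedComponents.surjective_coe c
      obtain ⟨x', rfl⟩ := ConnectedComponents.surjective_coe c'
      rw [Continuous.connectedComponentsLift_apply_coe,
        Continuous.connectedComponentsLift_apply_coe] at h
      have h' : (0 < t x) ↔ (0 < t x') := by simpa [b] using h
      rcases lt_or_gt_of_ne (ht0 x) with hx | hx
      · have hx' : t x' < 0 :=
          lt_of_le_of_ne (not_lt.1 fun hh => lt_asymm hx (h'.2 hh)) (ht0 x')
        exact hjoin (-1) (by norm_num) x x' (by linarith) (by linarith)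
      · exact hjoin 1 (by norm_num) x x' (by linarith) (by linarith [h'.1 hx])
    · intro c
      cases c
      · obtain ⟨x, hx⟩ := hne (-1) (by norm_num)
        refine ⟨x, ?_⟩
        rw [Continuous.connectedComponentsLift_apply_coe]
        simp only [b, decide_eq_false_iff_not]; linarith
      · obtain ⟨x, hx⟩ := hne 1 (by norm_num)
        refine ⟨x, ?_⟩
        rw [Continuous.connectedComponentsLift_apply_coe]
        simp only [b, decide_eq_true_eq]; linarith
  rw [Nat.card_eq_of_bijective _ hbij]
  simp

/-- For a nonzero `(a₁,a₂) ∈ ℝ²`, the intersection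
`{a₁x₁ + a₂x₂ = 0} ∩ S_{1,q}` has exactly two connected components. -/
theorem stmt13 (q : ℕ) (hq : 1 ≤ q) (a : ℝ) (ha : 1 < a)
    (a1 a2 : ℝ) (hA : (a1, a2) ≠ (0, 0)) :
    Nat.card (ConnectedComponents
      ↥({x : Fin (q+2) → ℝ | a1 * x 0 + a2 * x 1 = 0} ∩ S1q q a)) = 2 := by
  have hpos : 0 < a1 ^ 2 + a2 ^ 2 := by
    by_contra h
    have h1 : a1 = 0 := by nlinarith [sq_nonneg a1, sq_nonneg a2]
    have h2 : a2 = 0 := by nlinarith [sq_nonneg a1, sq_nonneg a2]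
    exact hA (by rw [h1, h2])
  have hr := Real.sqrt_pos.2 hpos
  have hr2 := Real.sq_sqrt hpos.le
  set r := √(a1 ^ 2 + a2 ^ 2)
  have key := aux_core q hq a ha (-a2 / r) (a1 / r) (by field_simp; linarith)
  have e : {x : Fin (q+2) → ℝ | a1 * x 0 + a2 * x 1 = 0}
      = {x : Fin (q+2) → ℝ | a1 / r * x 0 - (-a2 / r) * x 1 = 0} := by
    ext x
    have : a1 / r * x 0 - (-a2 / r) * x 1 = (a1 * x 0 + a2 * x 1) / r := by ring
    simp only [Set.mem_ofPred_eq, this, div_eq_zero_iff, hr.ne', or_false]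
  rw [e]
  exact key
end

section
/- Let q ≥ 2 be an integer, n = q + 2, a > 1, let (b₃,…,b_n) ∈ ℝ^q satisfy b₃² + ⋯ + b_n² = 1, and let c ∈ (0,1). Then the intersection {x ∈ ℝⁿ : b₃x₃ + ⋯ + b_nx_n = c} ∩ S_{1,q} is nonempty and has exactly one connected component (it is connected). -/
/-- Parametrisation of the section. -/
noncomputable def secParam (q : ℕ) (a c : ℝ) (b : Fin q → ℝ)
    (p : ℝ × EuclideanSpace ℝ (Fin (q+1))) : Fin (q+2) → ℝ :=
  Fin.cons (√(a^2 + p.2 0) * Real.cos p.1)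
    (Fin.cons (√(a^2 + p.2 0) * Real.sin p.1) (fun j => c * b j + p.2 j.succ))

lemma secParam_continuous (q : ℕ) (a c : ℝ) (b : Fin q → ℝ) :
    Continuous (secParam q a c b) := by
  refine continuous_pi fun i => ?_
  refine Fin.cases ?_ (fun i => ?_) i
  · simp only [secParam, Fin.cons_zero]
    fun_prop
  · refine Fin.cases ?_ (fun i => ?_) i
    · simp only [secParam, Fin.cons_zero, Fin.cons_succ]
      fun_prop
    · simp only [secParam, Fin.cons_succ]
      fun_prop

/-- The vector `(0, b)`. -/
noncomputable def extVec (q : ℕ) (b : Fin q → ℝ) : EuclideanSpace ℝ (Fin (q+1)) :=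
  WithLp.toLp 2 (Fin.cons 0 b)

lemma inner_extVec (q : ℕ) (b : Fin q → ℝ) (v : EuclideanSpace ℝ (Fin (q+1))) :
    inner ℝ (extVec q b) v = ∑ j, b j * v j.succ := by
  simp [extVec, PiLp.inner_apply, Fin.sum_univ_succ, mul_comm]

lemma secSphere_connected (q : ℕ) (hq : 2 ≤ q) (b : Fin q → ℝ)
    (hb : ∑ j : Fin q, b j ^ 2 = 1) (r : ℝ) (hr : 0 ≤ r) :
    IsConnected {v : EuclideanSpace ℝ (Fin (q+1)) |
      ∑ j, b j * v j.succ = 0 ∧ v 0 ^ 2 + ∑ j : Fin q, v j.succ ^ 2 = r ^ 2} := by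
  have hne : extVec q b ≠ 0 := by
    intro h
    have h2 := inner_extVec q b (extVec q b)
    rw [h, inner_zero_left] at h2
    rw [← h] at h2
    simp only [extVec, Fin.cons_succ] at h2
    simp only [← pow_two] at h2
    linarith
  have hrank : 1 < Module.rank ℝ (Submodule.span ℝ {extVec q b})ᗮ := by
    haveI : Fact (Module.finrank ℝ (EuclideanSpace ℝ (Fin (q+1))) = q + 1) := ⟨by simp⟩
    have h := Submodule.finrank_orthogonal_span_singleton (𝕜 := ℝ) (n := q) hne
    rw [← Module.finrank_eq_rank, h]
    exact_mod_cast hq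
  have h := (isConnected_sphere hrank 0 hr).image Subtype.val continuous_subtype_val.continuousOn
  convert h using 1
  ext v
  have hn : ‖v‖ = r ↔ v 0 ^ 2 + ∑ j : Fin q, v j.succ ^ 2 = r ^ 2 := by
    rw [← sq_eq_sq₀ (norm_nonneg v) hr, EuclideanSpace.norm_sq_eq, Fin.sum_univ_succ]
    simp
  simp only [Set.mem_setOf_eq, Set.mem_image, mem_sphere_zero_iff_norm]
  constructor
  · rintro ⟨h1, h2⟩
    refine ⟨⟨v, ?_⟩, ?_, rfl⟩
    · rw [Submodule.mem_orthogonal_singleton_iff_inner_right, inner_extVec, h1]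
    · exact hn.2 h2
  · rintro ⟨⟨w, hw⟩, h1, rfl⟩
    rw [Submodule.mem_orthogonal_singleton_iff_inner_right, inner_extVec] at hw
    exact ⟨hw, hn.1 h1⟩

/-- For `q ≥ 2`, a unit vector `(b₃,…,b_n) ∈ ℝ^q` and `c ∈ (0,1)`, the intersection
`{b₃x₃ + ⋯ + b_nx_n = c} ∩ S_{1,q}` is nonempty and connected (it has exactly one
connected component). -/
theorem stmt14 (q : ℕ) (hq : 2 ≤ q) (a : ℝ) (ha : 1 < a)
    (b : Fin q → ℝ) (hb : ∑ j : Fin q, b j ^ 2 = 1) (c : ℝ) (hc : c ∈ Set.Ioo (0:ℝ) 1) :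
    IsConnected ({x : Fin (q+2) → ℝ |
      ∑ j : Fin q, b j * x (⟨2+(j:ℕ), by omega⟩ : Fin (q+2)) = c} ∩ S1q q a) := by
  obtain ⟨hc0, hc1⟩ := hc
  have hidx : ∀ j : Fin q, (⟨2+(j:ℕ), by omega⟩ : Fin (q+2)) = j.succ.succ := by
    intro j; ext; simp; omega
  have hr : 0 ≤ 1 - c^2 := by nlinarith
  have h := ((isConnected_univ (α := ℝ)).prod
    (secSphere_connected q hq b hb (√(1 - c^2)) (Real.sqrt_nonneg _))).image
    (secParam q a c b) (secParam_continuous q a c b).continuousOn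
  rw [Real.sq_sqrt hr] at h
  have hexp : ∀ w : Fin q → ℝ, ∑ j, b j * (c * b j + w j) = c + ∑ j, b j * w j := by
    intro w
    have : ∀ j, b j * (c * b j + w j) = c * b j ^ 2 + b j * w j := fun j => by ring
    simp only [this, Finset.sum_add_distrib, ← Finset.mul_sum, hb, mul_one]
  have hexp2 : ∀ w : Fin q → ℝ, ∑ j, (c * b j + w j)^2
      = c^2 + 2 * c * (∑ j, b j * w j) + ∑ j, w j ^ 2 := by
    intro w
    have : ∀ j, (c * b j + w j)^2 = c^2 * b j ^ 2 + 2 * c * (b j * w j) + w j ^ 2 :=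
      fun j => by ring
    simp only [this, Finset.sum_add_distrib, ← Finset.mul_sum, hb, mul_one]
  convert h using 1
  ext x
  simp only [S1q, hidx, Set.mem_inter_iff, Set.mem_setOf_eq, Set.mem_image, Set.mem_prod,
    Set.mem_univ, true_and, Prod.exists]
  constructor
  · rintro ⟨h1, h2⟩
    have e1 := hexp (fun j => x j.succ.succ - c * b j)
    have e2 := hexp2 (fun j => x j.succ.succ - c * b j)
    simp only [add_sub_cancel] at e1 e2
    have e3 : ∑ j, b j * (x j.succ.succ - c * b j) = 0 := by linarith
    rw [e3] at e2
    refine ⟨Complex.arg ⟨x 0, x 1⟩, WithLp.toLp 2 (Fin.cons (x 0 ^ 2 + x 1 ^ 2 - a^2)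
      (fun j => x j.succ.succ - c * b j)), ⟨?_, ?_⟩, ?_⟩
    · simpa using e3
    · simp only [Fin.cons_zero, Fin.cons_succ]
      linarith
    · have hs : √(a^2 + (x 0 ^ 2 + x 1 ^ 2 - a^2)) = ‖(⟨x 0, x 1⟩ : ℂ)‖ := by
        rw [Complex.norm_def, Complex.normSq_mk]
        congr 1; ring
      funext i
      refine Fin.cases ?_ (fun i => ?_) i
      · simp only [secParam, Fin.cons_zero, hs, Complex.norm_mul_cos_arg]
      · refine Fin.cases ?_ (fun i => ?_) i
        · simp only [secParam, Fin.cons_zero, Fin.cons_succ, hs, Complex.norm_mul_sin_arg]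
          rfl
        · simp only [secParam, Fin.cons_succ]
          ring
  · rintro ⟨θ, v, ⟨h1, h2⟩, rfl⟩
    have hx0 : secParam q a c b (θ, v) 0 = √(a^2 + v 0) * Real.cos θ := rfl
    have hx1 : secParam q a c b (θ, v) 1 = √(a^2 + v 0) * Real.sin θ := rfl
    have hxj : ∀ j : Fin q, secParam q a c b (θ, v) j.succ.succ = c * b j + v j.succ :=
      fun j => rfl
    simp only [hx0, hx1, hxj]
    refine ⟨by rw [hexp (fun j => v j.succ), h1, add_zero], ?_⟩
    rw [hexp2 (fun j => v j.succ), h1]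
    have hS : 0 ≤ ∑ j : Fin q, v j.succ ^ 2 := Finset.sum_nonneg fun j _ => sq_nonneg _
    have hv : -1 ≤ v 0 := by
      have : v 0 ^ 2 ≤ 1 := by nlinarith [sq_nonneg c]
      exact (abs_le.1 ((sq_le_one_iff_abs_le_one _).1 this)).1
    have hpos : 0 ≤ a^2 + v 0 := by nlinarith
    have : (√(a^2 + v 0) * Real.cos θ)^2 + (√(a^2 + v 0) * Real.sin θ)^2 = a^2 + v 0 := by
      rw [mul_pow, mul_pow, Real.sq_sqrt hpos, ← mul_add, Real.cos_sq_add_sin_sq, mul_one]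
    rw [this]
    linarith
end

section
/- Let q ≥ 1 be an integer, n = q + 2, a > 1, and let X = Σ_{i=1}^n Rᵢ ∂/∂xᵢ be a polynomial vector field of degree m defined on S_{1,q}. Assume x₁R₂ − x₂R₁ ≠ 0 (equivalently, the extactic polynomial E_W(X) with W = span{x₁,x₂} is nonzero; this replaces the assumption that X has only finitely many invariant algebraic sets). Then there are at most m − 1 pairwise non-proportional nonzero pairs (a₁,a₂) ∈ ℝ² for which the hyperplane {a₁x₁ + a₂x₂ = 0} is invariant for X; since each such hyperplane meets S_{1,q} in exactly two connected components, X has at most 2(m − 1) invariant meridians. -/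
open MvPolynomial

/-- The polynomial `h = (x₁² + x₂² − a²)² + x₃² + ⋯ + x_n² − 1`
whose zero set is `S_{1,q} ⊂ ℝ^{q+2}`. -/
noncomputable def h1q (q : ℕ) (a : ℝ) : MvPolynomial (Fin (q+2)) ℝ :=
  (X 0 ^ 2 + X 1 ^ 2 - C (a^2))^2
    + (∑ j : Fin q, X (⟨2+(j:ℕ), by omega⟩ : Fin (q+2)) ^ 2) - 1

namespace Meridian

lemma hc_mul {σ : Type*} {p : MvPolynomial σ ℝ} {k : ℕ} (hp : p.IsHomogeneous k)
    (g : MvPolynomial σ ℝ) (j : ℕ) :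
    homogeneousComponent (k + j) (p * g) = p * homogeneousComponent j g := by
  let _ : GradedAlgebra (homogeneousSubmodule σ ℝ) := MvPolynomial.gradedAlgebra
  have hdec : ∀ (f : MvPolynomial σ ℝ) (i : ℕ),
      (DirectSum.decompose (homogeneousSubmodule σ ℝ) f i : MvPolynomial σ ℝ)
        = homogeneousComponent i f := fun f i => decomposition.decompose'_apply f i
  have := DirectSum.coe_decompose_mul_add_of_left_mem (homogeneousSubmodule σ ℝ) (i := k) (j := j)
    (a := p) (b := g) hp
  rw [← hdec, this, hdec]

lemma hc_mul_lt {σ : Type*} {p : MvPolynomial σ ℝ} {k n : ℕ} (hp : p.IsHomogeneous k)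
    (g : MvPolynomial σ ℝ) (h : ¬ k ≤ n) :
    homogeneousComponent n (p * g) = 0 := by
  let _ : GradedAlgebra (homogeneousSubmodule σ ℝ) := MvPolynomial.gradedAlgebra
  have hdec : ∀ (f : MvPolynomial σ ℝ) (i : ℕ),
      (DirectSum.decompose (homogeneousSubmodule σ ℝ) f i : MvPolynomial σ ℝ)
        = homogeneousComponent i f := fun f i => decomposition.decompose'_apply f i
  have := DirectSum.coe_decompose_mul_of_left_mem_of_not_le (homogeneousSubmodule σ ℝ) (i := k)
    (n := n) (a := p) (b := g) hp h
  rw [← hdec, this]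

lemma dvd_hc {σ : Type*} {p g : MvPolynomial σ ℝ} {k : ℕ} (hp : p.IsHomogeneous k)
    (h : p ∣ g) (n : ℕ) : p ∣ homogeneousComponent n g := by
  obtain ⟨f, rfl⟩ := h
  by_cases hk : k ≤ n
  · obtain ⟨j, rfl⟩ := Nat.exists_eq_add_of_le hk
    rw [hc_mul hp]; exact dvd_mul_right _ _
  · rw [hc_mul_lt hp _ hk]; exact dvd_zero _

variable {q : ℕ}

noncomputable def L (q : ℕ) (v : ℝ × ℝ) : MvPolynomial (Fin (q+2)) ℝ := C v.1 * X 0 + C v.2 * X 1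

noncomputable def r2 (q : ℕ) : MvPolynomial (Fin (q+2)) ℝ := X 0 ^ 2 + X 1 ^ 2

noncomputable def Z (q : ℕ) : MvPolynomial (Fin (q+2)) ℝ :=
  ∑ j : Fin q, X (⟨2+(j:ℕ), by omega⟩ : Fin (q+2)) ^ 2

lemma L_hom (v : ℝ × ℝ) : (L q v).IsHomogeneous 1 :=
  (isHomogeneous_C_mul_X _ _).add (isHomogeneous_C_mul_X _ _)

lemma r2_hom : (r2 q).IsHomogeneous 2 :=
  (isHomogeneous_X_pow _ _).add (isHomogeneous_X_pow _ _)

lemma Z_hom : (Z q).IsHomogeneous 2 :=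
  IsHomogeneous.sum _ _ _ fun _ _ => isHomogeneous_X_pow _ _

lemma eval_L (v : ℝ × ℝ) (x : Fin (q+2) → ℝ) : eval x (L q v) = v.1 * x 0 + v.2 * x 1 := by
  simp [L]

lemma eval_r2 (x : Fin (q+2) → ℝ) : eval x (r2 q) = x 0 ^ 2 + x 1 ^ 2 := by
  simp [r2]

noncomputable def pt (q : ℕ) (s t : ℝ) : Fin (q+2) → ℝ := fun i => if i = 0 then s else t

@[simp] lemma pt0 (s t : ℝ) : pt q s t 0 = s := by simp [pt]
@[simp] lemma pt1 (s t : ℝ) : pt q s t 1 = t := by simp [pt]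

lemma pos_of_ne {v : ℝ × ℝ} (hv : v ≠ 0) : v.1 ^ 2 + v.2 ^ 2 ≠ 0 := by
  intro h
  apply hv
  have h1 : v.1 = 0 := by nlinarith [sq_nonneg v.1, sq_nonneg v.2]
  have h2 : v.2 = 0 := by nlinarith [sq_nonneg v.1, sq_nonneg v.2]
  exact Prod.ext h1 h2

lemma L_ne {v : ℝ × ℝ} (hv : v ≠ 0) : L q v ≠ 0 := by
  intro h
  have := congrArg (eval (pt q v.1 v.2)) h
  rw [eval_L] at this
  simp at this
  exact pos_of_ne hv (by linarith)

lemma r2_ne : r2 q ≠ 0 := by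
  intro h
  have := congrArg (eval (pt q 1 0)) h
  rw [eval_r2] at this
  simp at this

lemma L_irr {v : ℝ × ℝ} (hv : v ≠ 0) : Irreducible (L q v) := by
  apply irreducible_of_totalDegree_eq_one ((L_hom v).totalDegree (L_ne hv))
  intro x hx
  apply isUnit_iff_ne_zero.mpr
  rintro rfl
  apply L_ne (q := q) hv
  ext d
  simpa using hx d

lemma L_rel {v : ℝ × ℝ} (hv : v ≠ 0) {g : MvPolynomial (Fin (q+2)) ℝ}
    (hg : eval (pt q (-v.2) v.1) g ≠ 0) : IsRelPrime (L q v) g := by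
  rw [(L_irr hv).isRelPrime_iff_not_dvd]
  rintro ⟨f, rfl⟩
  apply hg
  rw [map_mul, eval_L]
  simp
  left; ring

lemma L_r2 {v : ℝ × ℝ} (hv : v ≠ 0) : IsRelPrime (L q v) (r2 q) := by
  apply L_rel hv
  rw [eval_r2]
  simpa [add_comm] using pos_of_ne hv

lemma L_L {v w : ℝ × ℝ} (hv : v ≠ 0) (hw : w ≠ 0) (h : ∀ t : ℝ, v ≠ (t * w.1, t * w.2)) :
    IsRelPrime (L q v) (L q w) := by
  apply L_rel hv
  rw [eval_L]
  simp only [pt0, pt1]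
  intro h0
  have hp := pos_of_ne hw
  apply h ((v.1 * w.1 + v.2 * w.2) / (w.1 ^ 2 + w.2 ^ 2))
  ext
  · simp only; field_simp; linear_combination w.2 * h0
  · simp only; field_simp; linear_combination -w.1 * h0

lemma sum_pd_L (R : Fin (q+2) → MvPolynomial (Fin (q+2)) ℝ) (v : ℝ × ℝ) :
    (∑ i, R i * pderiv i (C v.1 * X 0 + C v.2 * X 1)) = C v.1 * R 0 + C v.2 * R 1 := by
  simp [pderiv_X, mul_add, Finset.sum_add_distrib, Pi.single_apply, mul_comm]

lemma sum_pd_r2 (R : Fin (q+2) → MvPolynomial (Fin (q+2)) ℝ) :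
    (∑ i, R i * pderiv i (r2 q)) = 2 * (X 0 * R 0 + X 1 * R 1) := by
  simp [r2, pderiv_X, mul_add, Finset.sum_add_distrib, Pi.single_apply]
  ring

lemma h_eq (a : ℝ) : h1q q a = (r2 q - C (a^2))^2 + Z q - 1 := rfl

/-- lower part of `h` -/
noncomputable def low (q : ℕ) (a : ℝ) : MvPolynomial (Fin (q+2)) ℝ :=
  C (-2 * a^2) * r2 q + Z q + C (a^4 - 1)

lemma h_eq2 (a : ℝ) : h1q q a = r2 q ^ 2 + low q a := by
  rw [h_eq, low]
  simp only [map_sub, map_mul, map_neg, map_pow, map_one, map_ofNat]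
  ring

lemma low_deg (a : ℝ) : (low q a).totalDegree ≤ 2 := by
  unfold low
  refine (totalDegree_add _ _).trans (max_le ((totalDegree_add _ _).trans (max_le ?_ ?_)) ?_)
  · exact (r2_hom.C_mul _).totalDegree_le
  · exact Z_hom.totalDegree_le
  · rw [totalDegree_C]; omega

lemma r4_hom : (r2 q ^ 2).IsHomogeneous 4 := r2_hom.pow 2

lemma h_deg (a : ℝ) : 4 ≤ (h1q q a).totalDegree := by
  by_contra hlt
  have h0 := homogeneousComponent_eq_zero (φ := h1q q a) (n := 4) (by omega)
  rw [h_eq2, map_add, homogeneousComponent_eq_self r4_hom,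
    homogeneousComponent_eq_zero _ _ (lt_of_le_of_lt (low_deg a) (by norm_num)), add_zero] at h0
  exact pow_ne_zero 2 r2_ne h0

lemma Xh (a : ℝ) (R : Fin (q+2) → MvPolynomial (Fin (q+2)) ℝ) :
    (∑ i, R i * pderiv i (h1q q a)) =
      C 4 * ((r2 q - C (a^2)) * (X 0 * R 0 + X 1 * R 1)) + ∑ i, R i * pderiv i (Z q) := by
  have : ∀ i, R i * pderiv i (h1q q a) =
      2 * (r2 q - C (a^2)) * (R i * pderiv i (r2 q)) + R i * pderiv i (Z q) := by
    intro i
    rw [h_eq]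
    simp only [map_add, map_sub, Derivation.leibniz_pow, pderiv_C, pderiv_one, smul_eq_mul,
      nsmul_eq_mul]
    push_cast
    ring
  rw [Finset.sum_congr rfl fun i _ => this i, Finset.sum_add_distrib, ← Finset.mul_sum, sum_pd_r2]
  simp only [map_ofNat]
  ring

variable {m : ℕ} {R : Fin (q+2) → MvPolynomial (Fin (q+2)) ℝ}

lemma S_deg (hdeg : ∀ i, (R i).totalDegree ≤ m) :
    (X 0 * R 0 + X 1 * R 1).totalDegree ≤ m + 1 := by
  refine (totalDegree_add _ _).trans (max_le ?_ ?_) <;>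
  · refine (totalDegree_mul _ _).trans ?_
    rw [totalDegree_X]
    have := hdeg 0
    have := hdeg 1
    omega

lemma E_deg (hdeg : ∀ i, (R i).totalDegree ≤ m) :
    (X 0 * R 1 - X 1 * R 0).totalDegree ≤ m + 1 := by
  refine (totalDegree_sub _ _).trans (max_le ?_ ?_) <;>
  · refine (totalDegree_mul _ _).trans ?_
    rw [totalDegree_X]
    have := hdeg 0
    have := hdeg 1
    omega

lemma Zs_deg (hdeg : ∀ i, (R i).totalDegree ≤ m) :
    (∑ i, R i * pderiv i (Z q)).totalDegree ≤ m + 1 := by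
  refine totalDegree_finsetSum_le fun i _ => ?_
  refine (totalDegree_mul _ _).trans ?_
  have := (Z_hom (q := q).pderiv (i := i)).totalDegree_le
  have := hdeg i
  omega

lemma K_deg {a : ℝ} {K : MvPolynomial (Fin (q+2)) ℝ} (hdeg : ∀ i, (R i).totalDegree ≤ m)
    (hinv : (∑ i, R i * pderiv i (h1q q a)) = K * h1q q a) (hK : K ≠ 0) :
    K.totalDegree + 4 ≤ m + 3 := by
  have hh : h1q q a ≠ 0 := by
    intro h
    have := h_deg (q := q) a
    rw [h] at this
    simp at this
  have h1 := totalDegree_mul_of_isDomain hK hh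
  have h2 := h_deg (q := q) a
  have h3 : (∑ i, R i * pderiv i (h1q q a)).totalDegree ≤ m + 3 := by
    rw [Xh]
    refine (totalDegree_add _ _).trans (max_le ?_ ((Zs_deg hdeg).trans (by omega)))
    refine (totalDegree_mul _ _).trans ?_
    rw [totalDegree_C]
    have h4 := totalDegree_mul (r2 q - C (a^2)) (X 0 * R 0 + X 1 * R 1)
    have h5 := totalDegree_sub_C_le (r2 q) (a^2)
    have h6 := (r2_hom (q := q)).totalDegree_le
    have := S_deg hdeg
    omega
  rw [hinv] at h3
  omega

lemma S_dvd {a : ℝ} {K : MvPolynomial (Fin (q+2)) ℝ} (hdeg : ∀ i, (R i).totalDegree ≤ m)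
    (hinv : (∑ i, R i * pderiv i (h1q q a)) = K * h1q q a) {d : ℕ} (hd : m ≤ d) :
    r2 q ∣ homogeneousComponent d (X 0 * R 0 + X 1 * R 1) := by
  have key : C 4 * (r2 q * (X 0 * R 0 + X 1 * R 1)) = r2 q ^ 2 * K + (K * low q a
      + C (4 * a^2) * (X 0 * R 0 + X 1 * R 1) - ∑ i, R i * pderiv i (Z q)) := by
    rw [Xh, h_eq2] at hinv
    simp only [map_mul]
    linear_combination hinv
  have h1 : homogeneousComponent (2 + d) (K * low q a) = 0 := by
    by_cases hK : K = 0
    · simp [hK]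
    apply homogeneousComponent_eq_zero
    have := K_deg hdeg hinv hK
    have := totalDegree_mul K (low q a)
    have := low_deg (q := q) a
    omega
  have h2 : homogeneousComponent (2 + d) (X 0 * R 0 + X 1 * R 1) = 0 := by
    apply homogeneousComponent_eq_zero
    have := S_deg hdeg
    omega
  have h3 : homogeneousComponent (2 + d) (∑ i, R i * pderiv i (Z q)) = 0 := by
    apply homogeneousComponent_eq_zero
    have := Zs_deg hdeg
    omega
  have := congrArg (homogeneousComponent (2 + d)) key
  rw [homogeneousComponent_C_mul, hc_mul r2_hom, map_add _ (r2 q ^ 2 * K), map_sub,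
    map_add _ (K * low q a),
    homogeneousComponent_C_mul, h1, h2, h3] at this
  simp only [mul_zero, add_zero, sub_zero] at this
  obtain ⟨f, hf⟩ := dvd_hc (r4_hom (q := q)) (dvd_mul_right (r2 q ^ 2) K) (2 + d)
  rw [hf] at this
  have h5 : C 4 * homogeneousComponent d (X 0 * R 0 + X 1 * R 1) = r2 q * f := by
    apply mul_left_cancel₀ (r2_ne (q := q))
    linear_combination this
  refine ⟨C (1/4) * f, ?_⟩
  have h6 : (C (1/4) * C 4 : MvPolynomial (Fin (q+2)) ℝ) = 1 := by
    rw [← C_mul]; norm_num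
  linear_combination C (1/4) * h5 - homogeneousComponent d (X 0 * R 0 + X 1 * R 1) * h6

lemma E_dvd {a : ℝ} {K : MvPolynomial (Fin (q+2)) ℝ} (hdeg : ∀ i, (R i).totalDegree ≤ m)
    (hinv : (∑ i, R i * pderiv i (h1q q a)) = K * h1q q a) {d : ℕ} (hd : m ≤ d) :
    r2 q ∣ homogeneousComponent d (X 0 * R 1 - X 1 * R 0) := by
  have key : X 0 * (X 0 * R 1 - X 1 * R 0) = r2 q * R 1 - X 1 * (X 0 * R 0 + X 1 * R 1) := by
    rw [r2]; ring
  have := congrArg (homogeneousComponent (1 + d)) key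
  rw [hc_mul (isHomogeneous_X _ _), map_sub _ (r2 q * R 1), hc_mul (isHomogeneous_X _ _)] at this
  have h1 : r2 q ∣ X 0 * homogeneousComponent d (X 0 * R 1 - X 1 * R 0) := by
    rw [this]
    exact dvd_sub (dvd_hc r2_hom (dvd_mul_right _ _) _) ((S_dvd hdeg hinv hd).mul_left _)
  have h2 : IsRelPrime (r2 q) (X 0) := by
    have := (L_r2 (q := q) (v := (1, 0)) (by simp)).symm
    simpa [L] using this
  exact h2.dvd_of_dvd_mul_left h1

lemma L_dvd {v : ℝ × ℝ} (hv : v ≠ 0) {K' : MvPolynomial (Fin (q+2)) ℝ}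
    (h : C v.1 * R 0 + C v.2 * R 1 = K' * L q v) : L q v ∣ X 0 * R 1 - X 1 * R 0 := by
  have h1 : C v.1 * (X 0 * R 1 - X 1 * R 0) = L q v * (R 1 - X 1 * K') := by
    have : L q v = C v.1 * X 0 + C v.2 * X 1 := rfl
    linear_combination -X 1 * h - R 1 * this
  have h2 : C v.2 * (X 0 * R 1 - X 1 * R 0) = L q v * (X 0 * K' - R 0) := by
    have : L q v = C v.1 * X 0 + C v.2 * X 1 := rfl
    linear_combination X 0 * h + R 0 * this
  have hp := pos_of_ne hv
  have h6 : C (v.1^2+v.2^2)⁻¹ * (C v.1 * C v.1 + C v.2 * C v.2 : MvPolynomial (Fin (q+2)) ℝ)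
      = 1 := by
    rw [← C_mul, ← C_mul, ← C_add, ← C_mul, ← C_1]; congr 1; field_simp
  refine ⟨C (v.1^2+v.2^2)⁻¹ * (C v.1 * (R 1 - X 1 * K') + C v.2 * (X 0 * K' - R 0)), ?_⟩
  linear_combination C (v.1^2+v.2^2)⁻¹ * (C v.1 * h1 + C v.2 * h2)
    - (X 0 * R 1 - X 1 * R 0) * h6

lemma le_of_dvd {P E : MvPolynomial (Fin (q+2)) ℝ} {k d : ℕ} (hP : P.IsHomogeneous k)
    (hE : E ≠ 0) (hd : E.totalDegree ≤ d) (h : P ∣ E) : k ≤ d := by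
  have hP0 : P ≠ 0 := by rintro rfl; exact hE (zero_dvd_iff.mp h)
  have := totalDegree_le_of_dvd_of_isDomain h hE
  rw [hP.totalDegree hP0] at this
  omega

lemma top_ne {E : MvPolynomial (Fin (q+2)) ℝ} (hE : E ≠ 0) :
    homogeneousComponent E.totalDegree E ≠ 0 := by
  intro h
  obtain ⟨d, hd, hd2⟩ := Finset.exists_mem_eq_sup E.support (support_nonempty.mpr hE)
    (fun s => s.sum fun _ e => e)
  have h1 := congrArg (coeff d) h
  rw [coeff_homogeneousComponent, if_pos, coeff_zero] at h1
  · exact mem_support_iff.mp hd h1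
  · exact hd2.symm

end Meridian

open Meridian in
/-- For a polynomial vector field `X = Σ Rᵢ ∂/∂xᵢ` of degree `m` defined on `S_{1,q}`
with `x₁R₂ − x₂R₁ ≠ 0` (the extactic polynomial for `W = span{x₁,x₂}`), there are at
most `m − 1` pairwise non-proportional nonzero pairs `(a₁,a₂) ∈ ℝ²` whose hyperplane
`{a₁x₁ + a₂x₂ = 0}` is invariant for `X`; since each such hyperplane meets `S_{1,q}` in
two connected components, `X` has at most `2(m−1)` invariant meridians. -/
theorem stmt15 (q : ℕ) (hq : 1 ≤ q) (a : ℝ) (ha : 1 < a) (m : ℕ)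
    (R : Fin (q+2) → MvPolynomial (Fin (q+2)) ℝ)
    (hdeg : ∀ i, (R i).totalDegree ≤ m) (hdeg' : ∃ i, (R i).totalDegree = m)
    (K : MvPolynomial (Fin (q+2)) ℝ)
    (hinv : (∑ i, R i * pderiv i (h1q q a)) = K * h1q q a)
    (hE : X 0 * R 1 - X 1 * R 0 ≠ 0)
    (s : Finset (ℝ × ℝ))
    (hs0 : ∀ v ∈ s, v ≠ 0)
    (hsinv : ∀ v ∈ s, ∃ K' : MvPolynomial (Fin (q+2)) ℝ,
        (∑ i, R i * pderiv i (C v.1 * X 0 + C v.2 * X 1))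
          = K' * (C v.1 * X 0 + C v.2 * X 1))
    (hprop : ∀ v ∈ s, ∀ w ∈ s, v ≠ w → ∀ t : ℝ, v ≠ (t * w.1, t * w.2)) :
    s.card ≤ m - 1 := by
  set E := X 0 * R 1 - X 1 * R 0 with hEdef
  have hLE : ∀ v ∈ s, L q v ∣ E := by
    intro v hv
    obtain ⟨K', hK'⟩ := hsinv v hv
    rw [sum_pd_L] at hK'
    exact L_dvd (hs0 v hv) hK'
  have hPE : (∏ v ∈ s, L q v) ∣ E := by
    apply Finset.prod_dvd_of_isRelPrime _ hLE
    intro v hv w hw hvw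
    exact L_L (hs0 v hv) (hs0 w hw) (hprop v hv w hw hvw)
  have hPhom : (∏ v ∈ s, L q v).IsHomogeneous s.card := by
    have := IsHomogeneous.prod s (L q) (fun _ => 1) (fun v _ => L_hom v)
    simpa using this
  have hd := E_deg hdeg
  rw [← hEdef] at hd
  by_cases hdm : E.totalDegree < m
  · have := le_of_dvd hPhom hE le_rfl hPE
    omega
  · have h1 := E_dvd hdeg hinv (d := E.totalDegree) (by omega)
    rw [← hEdef] at h1
    have h2 := dvd_hc hPhom hPE E.totalDegree
    have h3 : IsRelPrime (∏ v ∈ s, L q v) (r2 q) :=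
      IsRelPrime.prod_left fun v hv => L_r2 (hs0 v hv)
    have h4 := h3.mul_dvd h2 h1
    have := le_of_dvd (hPhom.mul r2_hom) (top_ne hE)
      (homogeneousComponent_isHomogeneous _ _).totalDegree_le h4
    omega
end

section
/- Let q ≥ 1 and m be integers with m − 1 ≥ q, set n = q + 2, and fix a > 1. Then there exists a polynomial vector field X = Σ_{i=1}^n Rᵢ ∂/∂xᵢ of degree m defined on S_{1,q} together with m − 1 pairwise non-proportional nonzero pairs (a_k, b_k) ∈ ℝ², k = 1,…,m−1, such that each hyperplane {a_kx₁ + b_kx₂ = 0} is invariant for X; counting the two connected components of each such intersection with S_{1,q}, X has 2(m − 1) invariant meridians. -/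
open MvPolynomial

/-- The product of the lines `x₁ + k x₂`. -/
noncomputable def linesProd (q m : ℕ) : MvPolynomial (Fin (q+2)) ℝ :=
  ∏ k : Fin (m-1), (C (1:ℝ) * X 0 + C ((k:ℕ):ℝ) * X 1)

/-- The rotation field multiplied by the product of lines. -/
noncomputable def rotField (q m : ℕ) (i : Fin (q+2)) : MvPolynomial (Fin (q+2)) ℝ :=
  if i = 0 then X 1 * linesProd q m else if i = 1 then -(X 0 * linesProd q m) else 0

theorem rotField_sum (q m : ℕ) (p : MvPolynomial (Fin (q+2)) ℝ) :
    ∑ i, rotField q m i * pderiv i p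
      = linesProd q m * (X 1 * pderiv 0 p - X 0 * pderiv 1 p) := by
  rw [Fin.sum_univ_succ, Fin.sum_univ_succ, Finset.sum_eq_zero]
  · simp [rotField]
    ring
  · intro i _
    have h0 : i.succ.succ ≠ (0 : Fin (q+2)) := Fin.succ_ne_zero _
    have h1 : i.succ.succ ≠ (1 : Fin (q+2)) := by
      intro h
      have := congrArg Fin.val h
      simp at this
    simp only [rotField, if_neg h0, if_neg h1, zero_mul]

theorem line_hom (q : ℕ) (b c : ℝ) :
    (C b * X 0 + C c * X 1 : MvPolynomial (Fin (q+2)) ℝ).IsHomogeneous 1 :=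
  (isHomogeneous_C_mul_X b 0).add (isHomogeneous_C_mul_X c 1)

theorem line_ne (q : ℕ) (c : ℝ) :
    (C 1 * X 0 + C c * X 1 : MvPolynomial (Fin (q+2)) ℝ) ≠ 0 := by
  intro h
  have := congrArg (eval (fun i : Fin (q+2) => if i = 0 then (1:ℝ) else 0)) h
  simp at this

theorem linesProd_ne (q m : ℕ) : linesProd q m ≠ 0 :=
  Finset.prod_ne_zero_iff.2 fun _ _ => line_ne q _

theorem linesProd_hom (q m : ℕ) : (linesProd q m).IsHomogeneous (m-1) := by
  have := IsHomogeneous.prod (Finset.univ : Finset (Fin (m-1)))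
    (fun k => (C (1:ℝ) * X 0 + C ((k:ℕ):ℝ) * X 1 : MvPolynomial (Fin (q+2)) ℝ))
    (fun _ => 1) (fun k _ => line_hom q _ _)
  simpa [linesProd] using this

theorem X_mul_deg (q m : ℕ) (hm : 1 ≤ m) (i : Fin (q+2)) :
    (X i * linesProd q m).totalDegree = m := by
  have h := ((isHomogeneous_X ℝ i).mul (linesProd_hom q m)).totalDegree
    (mul_ne_zero (X_ne_zero i) (linesProd_ne q m))
  omega

theorem stmt16 (q m : ℕ) (hq : 1 ≤ q) (hm : q + 1 ≤ m) (a : ℝ) (ha : 1 < a) :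
    ∃ (R : Fin (q+2) → MvPolynomial (Fin (q+2)) ℝ)
      (K : MvPolynomial (Fin (q+2)) ℝ) (v : Fin (m-1) → ℝ × ℝ),
      (∀ i, (R i).totalDegree ≤ m) ∧ (∃ i, (R i).totalDegree = m) ∧
      (∑ i, R i * pderiv i (h1q q a)) = K * h1q q a ∧
      (∀ k, v k ≠ 0) ∧
      (∀ k l, k ≠ l → ∀ t : ℝ, v k ≠ (t * (v l).1, t * (v l).2)) ∧
      (∀ k, ∃ K' : MvPolynomial (Fin (q+2)) ℝ,
        (∑ i, R i * pderiv i (C (v k).1 * X 0 + C (v k).2 * X 1))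
          = K' * (C (v k).1 * X 0 + C (v k).2 * X 1)) := by
  refine ⟨rotField q m, 0, fun k => (1, ((k:ℕ):ℝ)), ?_, ⟨0, ?_⟩, ?_, ?_, ?_, ?_⟩
  · intro i
    unfold rotField
    split_ifs
    · exact (X_mul_deg q m (by omega) 1).le
    · rw [totalDegree_neg]
      exact (X_mul_deg q m (by omega) 0).le
    · simp
  · simpa [rotField] using X_mul_deg q m (by omega) 1
  · rw [rotField_sum]
    have e0 : ∀ j : Fin q, pderiv (0 : Fin (q+2))
        ((X (⟨2+(j:ℕ), by omega⟩ : Fin (q+2)) : MvPolynomial (Fin (q+2)) ℝ)) = 0 := by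
      intro j
      apply pderiv_X_of_ne
      intro h
      have := congrArg Fin.val h
      simp at this
    have e1 : ∀ j : Fin q, pderiv (1 : Fin (q+2))
        ((X (⟨2+(j:ℕ), by omega⟩ : Fin (q+2)) : MvPolynomial (Fin (q+2)) ℝ)) = 0 := by
      intro j
      apply pderiv_X_of_ne
      intro h
      have := congrArg Fin.val h
      simp at this
      omega
    have z0 : pderiv (0 : Fin (q+2)) (X 1 : MvPolynomial (Fin (q+2)) ℝ) = 0 :=
      pderiv_X_of_ne (by simp)
    have z1 : pderiv (1 : Fin (q+2)) (X 0 : MvPolynomial (Fin (q+2)) ℝ) = 0 :=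
      pderiv_X_of_ne (by simp)
    simp only [h1q, map_sub, map_add, map_sum, pderiv_pow, e0, e1, z0, z1, pderiv_X_self,
      pderiv_C, pderiv_one, mul_zero, Finset.sum_const_zero]
    ring
  · intro k h
    simpa using congrArg Prod.fst h
  · intro k l hkl t h
    have h1 := congrArg Prod.fst h
    have h2 := congrArg Prod.snd h
    simp only [mul_one] at h1 h2
    rw [← h1, one_mul] at h2
    exact hkl (Fin.ext (by exact_mod_cast h2))
  · intro k
    have hd : (C (1:ℝ) * X 0 + C ((k:ℕ):ℝ) * X 1 : MvPolynomial (Fin (q+2)) ℝ)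
        ∣ linesProd q m :=
      Finset.dvd_prod_of_mem
        (fun k : Fin (m-1) => (C (1:ℝ) * X 0 + C ((k:ℕ):ℝ) * X 1 : MvPolynomial (Fin (q+2)) ℝ))
        (Finset.mem_univ k)
    obtain ⟨c, hc⟩ := hd.mul_right (X 1 * pderiv 0 (C (1:ℝ) * X 0 + C ((k:ℕ):ℝ) * X 1)
      - X 0 * pderiv 1 (C (1:ℝ) * X 0 + C ((k:ℕ):ℝ) * X 1))
    exact ⟨c, by rw [rotField_sum, mul_comm c]; exact hc⟩
end

section
/- Let p ≥ 2 be an integer, n = p + 2, a > 1, and let c ∈ ℝ with |c| < 1. Then the intersection {x ∈ ℝⁿ : x_{p+2} = c} ∩ S_{p,1} has exactly two connected components. -/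
/-- The hypersurface `S_{p,1} ⊂ ℝ^{p+2}` defined by
`(x₁² + ⋯ + x_{p+1}² − a²)² + x_{p+2}² = 1`, which is homeomorphic to `Sᵖ × S¹`. -/
def Sp1 (p : ℕ) (a : ℝ) : Set (Fin (p+2) → ℝ) :=
  {x | ((∑ i : Fin (p+1), x (Fin.castSucc i) ^ 2) - a^2)^2
        + x (Fin.last (p+1)) ^ 2 = 1}

lemma level_preconn (p : ℕ) (hp : 2 ≤ p) (c r : ℝ) (hr : 0 ≤ r) :
    IsPreconnected {x : Fin (p+2) → ℝ | x (Fin.last (p+1)) = c ∧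
      ∑ i : Fin (p+1), x (Fin.castSucc i) ^ 2 = r} := by
  have h1 : 1 < Module.rank ℝ (EuclideanSpace ℝ (Fin (p+1))) := by
    rw [← Module.finrank_eq_rank, finrank_euclideanSpace_fin]
    exact_mod_cast (by omega : 1 < p + 1)
  have h := (isPreconnected_sphere h1 0 (√r)).image
    (fun v => (Fin.snoc (α := fun _ => ℝ) (fun i => v i) c : Fin (p+2) → ℝ)) (by
      apply Continuous.continuousOn
      refine continuous_pi fun i => ?_
      refine Fin.lastCases ?_ (fun j => ?_) i
      · simpa using continuous_const
      · simp only [Fin.snoc_castSucc]; fun_prop)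
  convert h using 1
  ext x
  simp only [Set.mem_ofPred_eq, Set.mem_image, mem_sphere_zero_iff_norm, EuclideanSpace.norm_eq,
    Real.norm_eq_abs, sq_abs]
  constructor
  · rintro ⟨hx, hs⟩
    refine ⟨WithLp.toLp 2 (fun i => x (Fin.castSucc i)), by simp [hs], ?_⟩
    funext i
    refine Fin.lastCases ?_ (fun j => ?_) i
    · simp [hx]
    · simp
  · rintro ⟨v, hv, rfl⟩
    rw [Real.sqrt_inj (Finset.sum_nonneg fun i _ => sq_nonneg _) hr] at hv
    simp [hv]

/-- For `p ≥ 2` and `|c| < 1`, the intersection `{x_{p+2} = c} ∩ S_{p,1}` has exactly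
two connected components. -/
theorem stmt17 (p : ℕ) (hp : 2 ≤ p) (a : ℝ) (ha : 1 < a) (c : ℝ) (hc : |c| < 1) :
    Nat.card (ConnectedComponents
      ↥({x : Fin (p+2) → ℝ | x (Fin.last (p+1)) = c} ∩ Sp1 p a)) = 2 := by
  have hc2 : c ^ 2 < 1 := (sq_lt_one_iff_abs_lt_one c).2 hc
  obtain ⟨s, hs0, hs1, hs⟩ : ∃ s : ℝ, 0 < s ∧ s ≤ 1 ∧ s ^ 2 = 1 - c ^ 2 := by
    refine ⟨√(1 - c^2), Real.sqrt_pos.2 (by linarith), ?_, Real.sq_sqrt (by linarith)⟩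
    rw [Real.sqrt_le_one]
    nlinarith [sq_nonneg c]
  set X := ({x : Fin (p+2) → ℝ | x (Fin.last (p+1)) = c} ∩ Sp1 p a) with hX
  let q : (Fin (p+2) → ℝ) → ℝ := fun x => ∑ i : Fin (p+1), x (Fin.castSucc i) ^ 2
  have hq : Continuous q := by fun_prop
  have key : ∀ x, x ∈ X ↔ x (Fin.last (p+1)) = c ∧ (q x = a^2 + s ∨ q x = a^2 - s) := by
    intro x
    simp only [hX, Sp1, Set.mem_inter_iff, Set.mem_ofPred_eq]
    refine and_congr_right fun h => ?_
    rw [h]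
    change (q x - a^2)^2 + c^2 = 1 ↔ _
    rw [show ((q x - a^2)^2 + c^2 = 1) ↔ (q x - a^2)^2 = s^2 by
      rw [hs]; constructor <;> intro h <;> linarith, sq_eq_sq_iff_eq_or_eq_neg]
    refine or_congr ?_ ?_ <;> constructor <;> intro h <;> linarith
  have ex : ∀ r : ℝ, 0 ≤ r → ∃ x : Fin (p+2) → ℝ, x (Fin.last (p+1)) = c ∧ q x = r := by
    intro r hr
    refine ⟨Fin.snoc (α := fun _ => ℝ) (Pi.single 0 (√r)) c, by simp, ?_⟩
    simp only [q, Fin.snoc_castSucc]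
    rw [Finset.sum_eq_single 0]
    · simp [Real.sq_sqrt hr]
    · intro b _ hb; simp [hb]
    · simp
  have hp1 : 0 ≤ a^2 + s := by positivity
  have hp2 : 0 ≤ a^2 - s := by nlinarith
  have same : ∀ r : ℝ, 0 ≤ r → (r = a^2 + s ∨ r = a^2 - s) → ∀ x y : X, q x = r → q y = r →
      (x : ConnectedComponents X) = (y : ConnectedComponents X) := by
    intro r hr hr' x y hx hy
    rw [ConnectedComponents.coe_eq_coe']
    have hpre : IsPreconnected ((↑) ⁻¹' {x : Fin (p+2) → ℝ | x (Fin.last (p+1)) = c ∧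
        q x = r} : Set X) := by
      rw [← Topology.IsInducing.subtypeVal.isPreconnected_image, Subtype.image_preimage_coe,
        Set.inter_eq_right.2]
      · exact level_preconn p hp c r hr
      · rintro z ⟨h1, h2⟩
        exact (key z).2 ⟨h1, by rw [h2]; exact hr'⟩
    exact hpre.subset_connectedComponent (x := y) ⟨((key y).1 y.2).1, hy⟩
      ⟨((key x).1 x.2).1, hx⟩
  obtain ⟨u, hu, hu'⟩ := ex _ hp1
  obtain ⟨v, hv, hv'⟩ := ex _ hp2
  let U : X := ⟨u, (key u).2 ⟨hu, Or.inl hu'⟩⟩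
  let V : X := ⟨v, (key v).2 ⟨hv, Or.inr hv'⟩⟩
  rw [Nat.card_eq_two_iff]
  refine ⟨(U : ConnectedComponents X), (V : ConnectedComponents X), ?_, ?_⟩
  · intro h
    rw [ConnectedComponents.coe_eq_coe'] at h
    have hcl : IsClopen {x : X | q x < a^2} := by
      constructor
      · have : {x : X | q x < a^2} = {x : X | q x ≤ a^2} := by
          ext x
          simp only [Set.mem_ofPred_eq]
          refine ⟨le_of_lt, fun h => ?_⟩
          rcases ((key x).1 x.2).2 with h' | h' <;> linarith
        rw [this]
        exact isClosed_le (by fun_prop) continuous_const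
      · exact isOpen_lt (by fun_prop) continuous_const
    have hm : V ∈ {x : X | q x < a^2} := by
      change q v < a^2
      linarith
    have := hcl.connectedComponent_subset hm h
    change q u < a^2 at this
    linarith
  · refine Set.eq_univ_of_forall fun z => ?_
    obtain ⟨z, rfl⟩ := ConnectedComponents.surjective_coe z
    rcases ((key z).1 z.2).2 with h | h
    · exact Or.inl (same _ hp1 (Or.inl rfl) z U h hu')
    · exact Or.inr (same _ hp2 (Or.inr rfl) z V h hv')
end

section
/- Let p ≥ 2 be an integer, n = p + 2, a > 1, and let X = Σ_{i=1}^n Rᵢ ∂/∂xᵢ be a polynomial vector field of degree m defined on S_{p,1} with R_{p+2} ≠ 0 (ensuring X has only finitely many invariant parallels). Then the number of distinct real numbers c such that x_{p+2} − c divides R_{p+2} — equivalently, such that the hyperplane {x_{p+2} = c} is invariant for X — is at most m − 1. -/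
open MvPolynomial

/-- The polynomial `h = (x₁² + ⋯ + x_{p+1}² − a²)² + x_{p+2}² − 1`
whose zero set is `S_{p,1} ⊂ ℝ^{p+2}`. -/
noncomputable def hp1 (p : ℕ) (a : ℝ) : MvPolynomial (Fin (p+2)) ℝ :=
  ((∑ i : Fin (p+1), X (Fin.castSucc i) ^ 2) - C (a^2))^2
    + X (Fin.last (p+1)) ^ 2 - 1



theorem aux_deg {n : ℕ} (j : Fin n) (s : Finset ℝ) :
    (∏ c ∈ s, (X j - C c : MvPolynomial (Fin n) ℝ)) ≠ 0 ∧
    s.card ≤ (∏ c ∈ s, (X j - C c : MvPolynomial (Fin n) ℝ)).totalDegree := by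
  classical
  have h1 : ∀ c : ℝ, 1 ≤ (X j - C c : MvPolynomial (Fin n) ℝ).totalDegree := by
    intro c
    have h : (X j : MvPolynomial (Fin n) ℝ) = (X j - C c) + C c := by ring
    have h2 : (X j : MvPolynomial (Fin n) ℝ).totalDegree = 1 := totalDegree_X j
    rw [h] at h2
    have h3 := totalDegree_add (X j - C c : MvPolynomial (Fin n) ℝ) (C c)
    rw [h2, totalDegree_C] at h3
    simpa using h3
  have h0 : ∀ c : ℝ, (X j - C c : MvPolynomial (Fin n) ℝ) ≠ 0 := by
    intro c h
    have := h1 c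
    rw [h] at this
    simp at this
  induction s using Finset.induction_on with
  | empty => simp
  | insert c s hc ih =>
    rw [Finset.prod_insert hc, Finset.card_insert_of_notMem hc]
    refine ⟨mul_ne_zero (h0 c) ih.1, ?_⟩
    rw [totalDegree_mul_of_isDomain (h0 c) ih.1]
    have := h1 c
    have := ih.2
    omega

/-- For `p ≥ 2` and a polynomial vector field `X = Σ Rᵢ ∂/∂xᵢ` of degree `m` defined on
`S_{p,1}` with `R_{p+2} ≠ 0`, the number of distinct real `c` such that
`x_{p+2} − c` divides `R_{p+2}` — equivalently such that the hyperplane `{x_{p+2} = c}`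
is invariant for `X` — is at most `m − 1`. -/
theorem stmt18 (p : ℕ) (hp : 2 ≤ p) (a : ℝ) (ha : 1 < a) (m : ℕ)
    (R : Fin (p+2) → MvPolynomial (Fin (p+2)) ℝ)
    (hdeg : ∀ i, (R i).totalDegree ≤ m) (hdeg' : ∃ i, (R i).totalDegree = m)
    (K : MvPolynomial (Fin (p+2)) ℝ)
    (hinv : (∑ i, R i * pderiv i (hp1 p a)) = K * hp1 p a)
    (hRne : R (Fin.last (p+1)) ≠ 0)
    (s : Finset ℝ)
    (hs : ∀ c ∈ s, (X (Fin.last (p+1)) - C c) ∣ R (Fin.last (p+1))) :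
    s.card ≤ m - 1 := by
  classical
  by_contra hcard
  obtain ⟨hP0, hPdeg⟩ := aux_deg (Fin.last (p+1)) s
  have hdvd : (∏ c ∈ s, (X (Fin.last (p+1)) - C c : MvPolynomial (Fin (p+2)) ℝ)) ∣
      R (Fin.last (p+1)) := by
    apply Finset.prod_dvd_of_coprime _ hs
    intro c _ d _ hcd
    have hne : d - c ≠ 0 := sub_ne_zero.mpr (Ne.symm hcd)
    refine ⟨C (d - c)⁻¹, - C (d - c)⁻¹, ?_⟩
    have : (C (d - c)⁻¹ * C (d - c) : MvPolynomial (Fin (p+2)) ℝ) = 1 := by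
      rw [← C_mul, inv_mul_cancel₀ hne, C_1]
    rw [← this, C_sub]
    ring
  obtain ⟨Q, hQ⟩ := hdvd
  have hQ0 : Q ≠ 0 := by
    rintro rfl
    exact hRne (by rw [hQ, mul_zero])
  have hQd : Q.totalDegree = 0 := by
    have h := hdeg (Fin.last (p+1))
    rw [hQ, totalDegree_mul_of_isDomain hP0 hQ0] at h
    omega
  obtain ⟨q, rfl⟩ : ∃ q, Q = C q := ⟨_, totalDegree_eq_zero_iff_eq_C.mp hQd⟩
  have hq : q ≠ 0 := by
    rintro rfl
    exact hQ0 C_0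
  have ha4 : 0 < a ^ 4 - 1 := by
    have : 1 < a ^ 4 := one_lt_pow₀ ha (by norm_num)
    linarith
  set w : ℝ := Real.sqrt (a ^ 4 - 1) with hw
  have hwpos : 0 < w := Real.sqrt_pos.mpr ha4
  have hw2 : (w : ℂ) ^ 2 = (a : ℂ) ^ 4 - 1 := by
    have : w ^ 2 = a ^ 4 - 1 := Real.sq_sqrt ha4.le
    exact_mod_cast this
  let v : Fin (p+2) → ℂ := Fin.snoc (fun _ : Fin (p+1) => (0 : ℂ)) (w * Complex.I)
  have hv1 : ∀ i : Fin (p+1), v i.castSucc = 0 := fun i => by simp [v]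
  have hv2 : v (Fin.last (p+1)) = w * Complex.I := by simp [v]
  have key := congrArg (aeval v) hinv
  have hh : aeval v (hp1 p a) = 0 := by
    simp only [hp1, map_add, map_sub, map_pow, map_sum, aeval_X, aeval_C, hv1, hv2, map_one]
    simp [mul_pow, hw2]
    ring
  have hd1 : ∀ i : Fin (p+1), aeval v (pderiv i.castSucc (hp1 p a)) = 0 := by
    intro i
    simp [hp1, Derivation.leibniz_pow, pderiv_X, Pi.single_apply, hv1]
  have hd2 : aeval v (pderiv (Fin.last (p+1)) (hp1 p a)) = 2 * (w * Complex.I) := by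
    simp [hp1, Derivation.leibniz_pow, pderiv_X, Pi.single_apply, hv1, hv2]
  rw [map_mul, hh, mul_zero, map_sum, Fin.sum_univ_castSucc] at key
  simp only [map_mul, hd1, mul_zero, Finset.sum_const_zero, zero_add, hd2] at key
  have hwI : (w : ℂ) * Complex.I ≠ 0 :=
    mul_ne_zero (by exact_mod_cast hwpos.ne') Complex.I_ne_zero
  have hR : aeval v (R (Fin.last (p+1))) = 0 := by
    rcases mul_eq_zero.mp key with h | h
    · exact h
    · exact absurd h (mul_ne_zero two_ne_zero hwI)
  rw [hQ, map_mul, map_prod, aeval_C] at hR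
  rcases mul_eq_zero.mp hR with h | h
  · obtain ⟨c, _, hc⟩ := Finset.prod_eq_zero_iff.mp h
    rw [map_sub, aeval_X, aeval_C, hv2] at hc
    have := congrArg Complex.im hc
    simp at this
    exact hwpos.ne' this
  · simp at h
    exact hq h
end
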